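/- Let 0<r<1, α>0 and β∈ℝ. Then for every integer n ≥ n₁(α,r) one has E_n(C^{α,r}_{β,∞})_C = (4/π²) e^{-α n^r} ln(π n^{1-r}/(αr)) + γ_n e^{-α n^r}, where the quantity γ_n = γ_n(α,r,β) satisfies |γ_n| ≤ 20 π⁴. -/

import Mathlib

open MeasureTheory Real Filter
open scoped ENNReal

/-- The generalized Poisson kernel `P_{α,r,β}(t) = Σ_{k=1}^∞ e^{-α k^r} cos(kt − βπ/2)`. -/
noncomputable def genPoissonKernel (α r β : ℝ) (t : ℝ) : ℝ :=
  ∑' k : ℕ, Real.exp (-α * ((k : ℝ) + 1) ^ r) * Real.cos (((k : ℝ) + 1) * t - β * π / 2)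

/-- Fourier cosine coefficient `a_k = (1/π)∫_{-π}^{π} f(t) cos(kt) dt`. -/
noncomputable def fourierCoefA (f : ℝ → ℝ) (k : ℕ) : ℝ :=
  (1 / π) * ∫ t in (-π)..π, f t * Real.cos (k * t)

/-- Fourier sine coefficient `b_k = (1/π)∫_{-π}^{π} f(t) sin(kt) dt`. -/
noncomputable def fourierCoefB (f : ℝ → ℝ) (k : ℕ) : ℝ :=
  (1 / π) * ∫ t in (-π)..π, f t * Real.sin (k * t)

/-- Partial Fourier sum of order `m` of `f`. -/
noncomputable def fourierSum (m : ℕ) (f : ℝ → ℝ) (x : ℝ) : ℝ :=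
  fourierCoefA f 0 / 2 +
    ∑ k ∈ Finset.Icc 1 m, (fourierCoefA f k * Real.cos (k * x) + fourierCoefB f k * Real.sin (k * x))

/-- The class `C^{α,r}_{β,p}` of generalized Poisson integrals. -/
def poissonClass (α r β : ℝ) (p : ℝ≥0∞) : Set (ℝ → ℝ) :=
  {f | (∀ x, f (x + 2 * π) = f x) ∧ ∃ a₀ : ℝ, ∃ φ : ℝ → ℝ,
    (∀ x, φ (x + 2 * π) = φ x) ∧
    eLpNorm φ p (volume.restrict (Set.Ioc (0 : ℝ) (2 * π))) ≤ 1 ∧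
    (∫ t in (0 : ℝ)..(2 * π), φ t) = 0 ∧
    ∀ x, f x = a₀ / 2 + (1 / π) * ∫ t in (-π)..π, genPoissonKernel α r β (x - t) * φ t}

/-- `E_n(C^{α,r}_{β,p})_C`: uniform deviation of Fourier sums of order `n-1` on the class. -/
noncomputable def EnC (α r β : ℝ) (p : ℝ≥0∞) (n : ℕ) : ℝ :=
  ⨆ f ∈ poissonClass α r β p, ⨆ x : ℝ, |f x - fourierSum (n - 1) f x|

/-- `n₁(α,r)`: the smallest positive integer `n` with
`(1/(αr)) n^{-r} (1 + ln(π n^{1-r}/(αr))) + αr n^{-(1-r)} ≤ 1/(3π)³`. -/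
noncomputable def n₁ (α r : ℝ) : ℕ :=
  sInf {n : ℕ | 0 < n ∧
    1 / (α * r) * (n : ℝ) ^ (-r) * (1 + Real.log (π * (n : ℝ) ^ (1 - r) / (α * r))) +
      α * r * (n : ℝ) ^ (-(1 - r)) ≤ 1 / (3 * π) ^ 3}

/-!
By orthogonality, the deviation `f - S_{n-1}(f)` is the convolution of `φ` with the remainder kernel
`K t = ∑_{k ≥ n} e^{-α k ^ r} cos (k t - βπ/2)`. The weights of `K` are convex and vary on the scale
`1 / y` with `y = α r n ^ (r - 1)`, so two summations by parts give
`K t = -e^{-α n ^ r} sin ((n - 1/2) t - βπ/2) / t` up to an error which is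
`e^{-α n ^ r} O(y / t² + 1)`, while `|K| ≤ 3 e^{-α n ^ r} / y` everywhere. Since `|sin|` has mean
`2 / π` and `n y` is large, `‖K‖₁ = e^{-α n ^ r} ((4 / π) log (π / y) + O(1))`, which bounds the
deviation from above. The sign of the main term, changed to a constant on `[-y, y]` so that its mean
vanishes, is an admissible `φ` that attains this bound up to `O(1)`.

The class admits non-measurable `φ`. These are harmless because the kernel vanishes only on a null
set: `e^{-α k ^ r}` is completely monotone in `k`, so the Euler transform of its generating function
continues the kernel analytically across the unit circle away from `1`.
-/

/-! ### Completely monotone sequences -/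

/-- The difference operator `f ↦ f - f(· + 1)`, for sequences and for functions on the line. -/
def negDiff {M : Type*} [Add M] [One M] (f : M → ℝ) (x : M) : ℝ :=
  f x - f (x + 1)

/-- A sequence is completely monotone if all its iterated differences, with the sign convention of
`negDiff`, are nonnegative. -/
def CompletelyMonotone (a : ℕ → ℝ) : Prop :=
  ∀ m k, 0 ≤ (negDiff^[m] a) k

lemma semiconj_sample_negDiff {M : Type*} [AddMonoidWithOne M] (x : M) :
    Function.Semiconj (fun (f : M → ℝ) (k : ℕ) ↦ f (x + k)) negDiff negDiff := by
  intro f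
  ext k
  simp [negDiff, add_assoc]

namespace CompletelyMonotone

variable {a : ℕ → ℝ}

lemma nonneg (ha : CompletelyMonotone a) (k : ℕ) : 0 ≤ a k :=
  ha 0 k

lemma shift (ha : CompletelyMonotone a) : CompletelyMonotone fun k ↦ a (k + 1) := by
  intro m k
  have h := congrFun ((semiconj_sample_negDiff (1 : ℕ)).iterate_right m a) k
  simp only [Nat.cast_id, add_comm 1] at h
  exact h ▸ ha m (k + 1)

protected lemma negDiff (ha : CompletelyMonotone a) : CompletelyMonotone (negDiff a) :=
  fun m ↦ ha (m + 1)

lemma antitone (ha : CompletelyMonotone a) : Antitone a :=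
  antitone_nat_of_succ_le fun k ↦ sub_nonneg.1 (ha 1 k)

end CompletelyMonotone

lemma hasDerivAt_iterate_negDiff {f g : ℝ → ℝ} (h : ∀ x, 0 < x → HasDerivAt f (-g x) x) (m : ℕ) :
    ∀ x, 0 < x → HasDerivAt (negDiff^[m] f) (-(negDiff^[m] g) x) x := by
  induction m with
  | zero => exact h
  | succ m ih =>
    intro x hx
    rw [Function.iterate_succ_apply', Function.iterate_succ_apply']
    exact ((ih x hx).sub ((ih (x + 1) (by linarith)).comp_add_const x 1)).congr_deriv
      (by simp only [negDiff]; ring)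

lemma iterate_negDiff_nonneg_of_deriv_closed {S : Set (ℝ → ℝ)}
    (hS : ∀ f ∈ S, ∀ x, 0 < x → 0 ≤ f x)
    (hS' : ∀ f ∈ S, ∃ g ∈ S, ∀ x, 0 < x → HasDerivAt f (-g x) x) (m : ℕ) :
    ∀ f ∈ S, ∀ x, 0 < x → 0 ≤ (negDiff^[m] f) x := by
  induction m with
  | zero => exact hS
  | succ m ih =>
    intro f hf x hx
    obtain ⟨g, hg, hfg⟩ := hS' f hf
    have hderiv := hasDerivAt_iterate_negDiff hfg m
    have hanti : AntitoneOn (negDiff^[m] f) (Set.Ioi 0) := by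
      refine antitoneOn_of_hasDerivWithinAt_nonpos (f' := fun y ↦ -(negDiff^[m] g) y)
        (convex_Ioi 0) (fun y hy ↦ (hderiv y hy).continuousAt.continuousWithinAt) ?_ ?_
      all_goals
        intro y hy
        rw [interior_Ioi] at hy
      · exact (hderiv y hy).hasDerivWithinAt
      · exact neg_nonpos.2 (ih g hg y hy)
    rw [Function.iterate_succ_apply']
    exact sub_nonneg.2 (hanti hx (Set.mem_Ioi.2 (by linarith)) (by linarith))

/-- The convex cone generated by the functions `x ^ (-p) * exp (-α * x ^ r)` with `p ≥ 0`; for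
`r ≤ 1` it is closed under `f ↦ -f'` on the positive half-line. -/
def powExpCone (α r : ℝ) : Submodule NNReal (ℝ → ℝ) :=
  Submodule.span NNReal
    (Set.range fun (p : NNReal) (x : ℝ) ↦ x ^ (-(p : ℝ)) * exp (-α * x ^ r))

namespace powExpCone

variable {α r : ℝ} {f : ℝ → ℝ}

lemma rpow_mul_exp_mem {p : ℝ} (hp : 0 ≤ p) :
    (fun x : ℝ ↦ x ^ (-p) * exp (-α * x ^ r)) ∈ powExpCone α r :=
  Submodule.subset_span ⟨⟨p, hp⟩, rfl⟩

lemma nonneg (hf : f ∈ powExpCone α r) {x : ℝ} (hx : 0 < x) : 0 ≤ f x := by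
  induction hf using Submodule.span_induction with
  | mem f hf =>
    obtain ⟨p, rfl⟩ := hf
    positivity
  | zero => exact le_rfl
  | add f g _ _ hf hg => exact add_nonneg hf hg
  | smul c f _ hf => exact mul_nonneg c.2 hf

lemma hasDerivAt_rpow_mul_exp (p : ℝ) {x : ℝ} (hx : 0 < x) :
    HasDerivAt (fun x : ℝ ↦ x ^ (-p) * exp (-α * x ^ r))
      (-(p * (x ^ (-(p + 1)) * exp (-α * x ^ r)) +
        α * r * (x ^ (-(p + 1 - r)) * exp (-α * x ^ r)))) x := by
  have hpow : ∀ q : ℝ, HasDerivAt (fun x : ℝ ↦ x ^ q) (q * x ^ (q - 1)) x :=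
    fun q ↦ hasDerivAt_rpow_const (.inl hx.ne')
  refine ((hpow (-p)).mul ((hpow r).const_mul (-α)).exp).congr_deriv ?_
  have hsplit : x ^ (-(p + 1 - r)) = x ^ (-p) * x ^ (r - 1) := by
    rw [← rpow_add hx]
    ring_nf
  rw [hsplit, show -(p + 1) = -p - 1 by ring]
  ring

lemma exists_hasDerivAt (hα : 0 ≤ α) (hr0 : 0 ≤ r) (hr1 : r ≤ 1) (hf : f ∈ powExpCone α r) :
    ∃ g ∈ powExpCone α r, ∀ x, 0 < x → HasDerivAt f (-g x) x := by
  induction hf using Submodule.span_induction with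
  | mem f hf =>
    obtain ⟨p, rfl⟩ := hf
    have hp : 0 ≤ (p : ℝ) + 1 - r := by linarith [p.coe_nonneg]
    exact ⟨_, add_mem (Submodule.smul_mem _ p (rpow_mul_exp_mem (by positivity)))
      (Submodule.smul_mem _ ⟨α * r, by positivity⟩ (rpow_mul_exp_mem hp)),
      fun x hx ↦ hasDerivAt_rpow_mul_exp p hx⟩
  | zero => exact ⟨0, zero_mem _, fun x _ ↦ (hasDerivAt_const x (0 : ℝ)).congr_deriv (by simp)⟩
  | add f g _ _ hf hg =>
    obtain ⟨f', hf', hff'⟩ := hf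
    obtain ⟨g', hg', hgg'⟩ := hg
    exact ⟨f' + g', add_mem hf' hg', fun x hx ↦
      ((hff' x hx).add (hgg' x hx)).congr_deriv (neg_add _ _).symm⟩
  | smul c f _ hf =>
    obtain ⟨f', hf', hff'⟩ := hf
    exact ⟨c • f', Submodule.smul_mem _ c hf', fun x hx ↦
      ((hff' x hx).const_mul (c : ℝ)).congr_deriv (mul_neg _ _)⟩

end powExpCone

/-- The coefficients `e^{-α (n + j)^r}` of the kernel, counted from the frequency `n`. -/
noncomputable def expWeight (α r n : ℝ) (j : ℕ) : ℝ :=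
  exp (-α * (n + j) ^ r)

lemma completelyMonotone_expWeight {α r n : ℝ} (hα : 0 ≤ α) (hr0 : 0 ≤ r) (hr1 : r ≤ 1)
    (hn : 0 < n) : CompletelyMonotone (expWeight α r n) := by
  intro m k
  have hmem : (fun x ↦ exp (-α * x ^ r)) ∈ (powExpCone α r : Set (ℝ → ℝ)) := by
    simpa using powExpCone.rpow_mul_exp_mem (α := α) (r := r) le_rfl
  have hsample := congrFun
    ((semiconj_sample_negDiff n).iterate_right m fun x ↦ exp (-α * x ^ r)) k
  rw [show expWeight α r n = fun k ↦ exp (-α * (n + (k : ℕ)) ^ r) from rfl, ← hsample]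
  exact iterate_negDiff_nonneg_of_deriv_closed (fun f hf x ↦ powExpCone.nonneg hf)
    (fun f ↦ powExpCone.exists_hasDerivAt hα hr0 hr1) m _ hmem _ (by positivity)

/-! ### Power series on the closed unit disc and the Euler transform -/

/-- The generating function `∑ a j * z ^ j` of a real sequence; it is used for summable `a` and
`‖z‖ ≤ 1`, and for bounded `a` and `‖z‖ < 1`. -/
noncomputable def genFun (a : ℕ → ℝ) (z : ℂ) : ℂ :=
  ∑' j, (a j : ℂ) * z ^ j

section GenFun

variable {a b c : ℕ → ℝ} {z : ℂ}

lemma norm_ofReal_mul_pow_le {x y : ℝ} (hxy : |x| ≤ y) (hz : ‖z‖ ≤ 1) (j : ℕ) :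
    ‖(x : ℂ) * z ^ j‖ ≤ y := by
  rw [norm_mul, norm_pow, Complex.norm_real, norm_eq_abs]
  exact (mul_le_of_le_one_right (abs_nonneg x) (pow_le_one₀ (norm_nonneg z) hz)).trans hxy

lemma summable_genFun (ha : Summable a) (hz : ‖z‖ ≤ 1) :
    Summable fun j ↦ (a j : ℂ) * z ^ j :=
  .of_norm_bounded ha.abs fun j ↦ norm_ofReal_mul_pow_le le_rfl hz j

lemma norm_genFun_le (hc : Summable c) (hac : ∀ j, |a j| ≤ c j) (hz : ‖z‖ ≤ 1) :
    ‖genFun a z‖ ≤ ∑' j, c j :=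
  tsum_of_norm_bounded hc.hasSum fun j ↦ norm_ofReal_mul_pow_le (hac j) hz j

lemma genFun_sub (ha : Summable a) (hb : Summable b) (hz : ‖z‖ ≤ 1) :
    genFun (fun j ↦ a j - b j) z = genFun a z - genFun b z := by
  simp only [genFun, Complex.ofReal_sub, sub_mul]
  exact (summable_genFun ha hz).tsum_sub (summable_genFun hb hz)

lemma genFun_eq_add_mul_shift (ha : Summable a) (hz : ‖z‖ ≤ 1) :
    genFun a z = a 0 + z * genFun (fun j ↦ a (j + 1)) z := by
  rw [genFun, (summable_genFun ha hz).tsum_eq_zero_add, pow_zero, mul_one, genFun, ← tsum_mul_left]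
  simp only [pow_succ', mul_left_comm]

lemma one_sub_mul_genFun (ha : Summable a) (hz : ‖z‖ ≤ 1) :
    (1 - z) * genFun a z = a 0 - z * genFun (negDiff a) z := by
  have hdiff : genFun (negDiff a) z = genFun a z - genFun (fun j ↦ a (j + 1)) z :=
    genFun_sub ha ((summable_nat_add_iff 1).2 ha) hz
  rw [hdiff]
  linear_combination genFun_eq_add_mul_shift ha hz

lemma nonneg_of_antitone_of_summable (ha : Antitone a) (has : Summable a) (j : ℕ) : 0 ≤ a j :=
  ha.le_of_tendsto has.tendsto_atTop_zero j

lemma hasSum_negDiff (ha : Summable a) : HasSum (negDiff a) (a 0) := by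
  have h := ha.hasSum.sub ((summable_nat_add_iff 1).2 ha).hasSum
  rwa [ha.tsum_eq_zero_add, add_sub_cancel_right] at h

lemma norm_one_sub_mul_genFun_le (ha : Antitone a) (has : Summable a) (hz : ‖z‖ ≤ 1) :
    ‖(1 - z) * genFun a z‖ ≤ 2 * a 0 := by
  have hdiff : ‖genFun (negDiff a) z‖ ≤ a 0 := by
    rw [← (hasSum_negDiff has).tsum_eq]
    exact norm_genFun_le (hasSum_negDiff has).summable
      (fun j ↦ (abs_of_nonneg (sub_nonneg.2 (ha j.le_succ))).le) hz
  calc ‖(1 - z) * genFun a z‖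
      ≤ ‖(a 0 : ℂ)‖ + ‖z‖ * ‖genFun (negDiff a) z‖ := by
        rw [one_sub_mul_genFun has hz, ← norm_mul]
        exact norm_sub_le _ _
    _ ≤ a 0 + 1 * a 0 := by
        gcongr
        rw [Complex.norm_real, norm_of_nonneg (nonneg_of_antitone_of_summable ha has 0)]
    _ = 2 * a 0 := by ring

end GenFun

/-- The step `a ↦ 2 a(· + 1) - a` of the Euler transform of a power series. -/
def eulerStep (a : ℕ → ℝ) (k : ℕ) : ℝ :=
  a (k + 1) - negDiff a k

lemma iterate_eulerStep_sub (a b : ℕ → ℝ) (m k : ℕ) :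
    (eulerStep^[m] fun k ↦ a k - b k) k = (eulerStep^[m] a) k - (eulerStep^[m] b) k := by
  induction m generalizing k with
  | zero => rfl
  | succ m ih =>
    simp only [Function.iterate_succ_apply', eulerStep, negDiff, ih]
    ring

-- A completely monotone `a` splits as `a k = a (k + 1) + negDiff a k` into two sequences of the
-- same kind, and `eulerStep` takes their difference.
lemma CompletelyMonotone.abs_iterate_eulerStep_le {a : ℕ → ℝ} (ha : CompletelyMonotone a)
    (m k : ℕ) : |(eulerStep^[m] a) k| ≤ a k := by
  induction m generalizing a k with
  | zero => exact (abs_of_nonneg (ha.nonneg k)).le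
  | succ m ih =>
    have hsplit : (eulerStep^[m + 1] a) k =
        (eulerStep^[m] fun k ↦ a (k + 1)) k - (eulerStep^[m] (negDiff a)) k :=
      iterate_eulerStep_sub _ _ m k
    calc |(eulerStep^[m + 1] a) k|
        ≤ |(eulerStep^[m] fun k ↦ a (k + 1)) k| + |(eulerStep^[m] (negDiff a)) k| :=
          hsplit ▸ abs_sub _ _
      _ ≤ a (k + 1) + negDiff a k := add_le_add (ih ha.shift k) (ih ha.negDiff k)
      _ = a k := add_sub_cancel _ _

section EulerTransform

variable {a : ℕ → ℝ} {z : ℂ}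

lemma two_sub_mul_genFun (ha : Summable a) (hz : ‖z‖ ≤ 1) :
    (2 - z) * genFun a z = 2 * a 0 + z * genFun (eulerStep a) z := by
  have hstep : genFun (eulerStep a) z = genFun (fun j ↦ a (j + 1)) z - genFun (negDiff a) z :=
    genFun_sub ((summable_nat_add_iff 1).2 ha) (hasSum_negDiff ha).summable hz
  rw [hstep]
  linear_combination genFun_eq_add_mul_shift ha hz + one_sub_mul_genFun ha hz

/-- The Taylor coefficients, up to the factor `2 / (2 - z)`, of `genFun a z` in the variable
`z / (2 - z)`. -/
def eulerCoeff (a : ℕ → ℝ) (m : ℕ) : ℝ :=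
  (eulerStep^[m] a) 0

lemma CompletelyMonotone.summable_iterate_eulerStep (ha : CompletelyMonotone a) (has : Summable a)
    (m : ℕ) : Summable (eulerStep^[m] a) :=
  .of_norm_bounded has (ha.abs_iterate_eulerStep_le m)

lemma genFun_eq_sum_eulerCoeff_add (ha : CompletelyMonotone a) (has : Summable a)
    (hz : ‖z‖ ≤ 1) (hz2 : 2 - z ≠ 0) (M : ℕ) :
    genFun a z = 2 / (2 - z) * ∑ m ∈ Finset.range M, (eulerCoeff a m : ℂ) * (z / (2 - z)) ^ m +
      (z / (2 - z)) ^ M * genFun (eulerStep^[M] a) z := by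
  induction M with
  | zero => simp
  | succ M ih =>
    have hstep : genFun (eulerStep^[M] a) z = 2 / (2 - z) * eulerCoeff a M +
        z / (2 - z) * genFun (eulerStep^[M + 1] a) z := by
      rw [Function.iterate_succ_apply', eulerCoeff]
      field_simp
      linear_combination two_sub_mul_genFun (ha.summable_iterate_eulerStep has M) hz
    rw [ih, hstep, Finset.sum_range_succ]
    ring

lemma CompletelyMonotone.norm_eulerCoeff_mul_pow_le (ha : CompletelyMonotone a) {w : ℂ} {ρ : ℝ}
    (hw : ‖w‖ ≤ ρ) (m : ℕ) : ‖(eulerCoeff a m : ℂ) * w ^ m‖ ≤ a 0 * ρ ^ m := by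
  rw [norm_mul, norm_pow, Complex.norm_real, norm_eq_abs]
  exact mul_le_mul (ha.abs_iterate_eulerStep_le m 0) (by gcongr) (by positivity) (ha.nonneg 0)

lemma CompletelyMonotone.summable_eulerCoeff (ha : CompletelyMonotone a) {w : ℂ} (hw : ‖w‖ < 1) :
    Summable fun m ↦ (eulerCoeff a m : ℂ) * w ^ m :=
  .of_norm_bounded ((summable_geometric_of_lt_one (norm_nonneg w) hw).mul_left (a 0))
    (ha.norm_eulerCoeff_mul_pow_le le_rfl)

lemma CompletelyMonotone.genFun_eq_genFun_eulerCoeff (ha : CompletelyMonotone a)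
    (has : Summable a) (hz : ‖z‖ ≤ 1) (hz2 : ‖z‖ < ‖2 - z‖) :
    genFun a z = 2 / (2 - z) * genFun (eulerCoeff a) (z / (2 - z)) := by
  have hpos : 0 < ‖2 - z‖ := (norm_nonneg z).trans_lt hz2
  have hw : ‖z / (2 - z)‖ < 1 := by rwa [norm_div, div_lt_one hpos]
  have hmain := (ha.summable_eulerCoeff hw).hasSum.tendsto_sum_nat.const_mul (2 / (2 - z))
  have hrem : Tendsto (fun M ↦ (z / (2 - z)) ^ M * genFun (eulerStep^[M] a) z) atTop (nhds 0) := by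
    have hpow := (tendsto_pow_atTop_nhds_zero_of_lt_one (norm_nonneg _) hw).mul_const (∑' j, a j)
    rw [zero_mul] at hpow
    refine squeeze_zero_norm (fun M ↦ ?_) hpow
    rw [norm_mul, norm_pow]
    gcongr
    exact norm_genFun_le has (ha.abs_iterate_eulerStep_le M) hz
  have hlim := hmain.add hrem
  simp only [← genFun_eq_sum_eulerCoeff_add ha has hz (norm_pos_iff.1 hpos), add_zero] at hlim
  exact tendsto_nhds_unique tendsto_const_nhds hlim

lemma CompletelyMonotone.analyticOnNhd_genFun_eulerCoeff (ha : CompletelyMonotone a) :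
    AnalyticOnNhd ℂ (genFun (eulerCoeff a)) (Metric.ball 0 1) := by
  refine DifferentiableOn.analyticOnNhd (fun w hw ↦ ?_) Metric.isOpen_ball
  obtain ⟨ρ, hwρ, hρ⟩ := exists_between (mem_ball_zero_iff.1 hw)
  have hdiff : DifferentiableOn ℂ (genFun (eulerCoeff a)) (Metric.ball 0 ρ) :=
    Complex.differentiableOn_tsum_of_summable_norm
      ((summable_geometric_of_lt_one ((norm_nonneg w).trans hwρ.le) hρ).mul_left (a 0))
      (fun m ↦ by fun_prop) Metric.isOpen_ball
      (fun m v hv ↦ ha.norm_eulerCoeff_mul_pow_le (mem_ball_zero_iff.1 hv).le m)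
  exact (hdiff.differentiableAt
    (Metric.isOpen_ball.mem_nhds (mem_ball_zero_iff.2 hwρ))).differentiableWithinAt

end EulerTransform

/-! ### Cosine series -/

section TrigIntegrals

lemma intervalIntegrable_continuous_mul {φ g : ℝ → ℝ} {a b : ℝ}
    (hφ : IntervalIntegrable φ volume a b) (hg : Continuous g) :
    IntervalIntegrable (fun t ↦ g t * φ t) volume a b :=
  hφ.continuousOn_mul hg.continuousOn

lemma integral_cos_int_mul_sub (m : ℤ) (a : ℝ) :
    ∫ t in -π..π, cos (m * t - a) = if m = 0 then 2 * π * cos a else 0 := by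
  split_ifs with hm
  · simp [hm, two_mul]
  · have hm' : (m : ℝ) ≠ 0 := Int.cast_ne_zero.2 hm
    rw [intervalIntegral.integral_comp_mul_sub (fun t ↦ cos t) hm', integral_cos,
      show m * -π - a = m * π - a - m * (2 * π) by ring, sin_sub_int_mul_two_pi,
      sub_self, smul_zero]

lemma integral_cos_nat_mul_sub_mul_cos {j : ℕ} (hj : j ≠ 0) (k : ℕ) (a b : ℝ) :
    ∫ t in -π..π, cos (j * t - a) * cos (k * t - b) = if j = k then π * cos (a - b) else 0 := by
  have hprod : ∀ t : ℝ, cos (j * t - a) * cos (k * t - b) =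
      1 / 2 * cos (((j - k : ℤ) : ℝ) * t - (a - b)) +
        1 / 2 * cos (((j + k : ℤ) : ℝ) * t - (a + b)) := by
    intro t
    push_cast
    rw [show ((j : ℝ) - k) * t - (a - b) = (j * t - a) - (k * t - b) by ring,
      show ((j : ℝ) + k) * t - (a + b) = (j * t - a) + (k * t - b) by ring, cos_sub (j * t - a),
      cos_add (j * t - a)]
    ring
  have hint : ∀ (m : ℤ) (d : ℝ),
      IntervalIntegrable (fun t : ℝ ↦ 1 / 2 * cos (m * t - d)) volume (-π) π :=
    fun m d ↦ Continuous.intervalIntegrable (by fun_prop) _ _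
  simp only [hprod]
  rw [intervalIntegral.integral_add (hint _ _) (hint _ _), intervalIntegral.integral_const_mul,
    intervalIntegral.integral_const_mul, integral_cos_int_mul_sub, integral_cos_int_mul_sub,
    if_neg (show (j + k : ℤ) ≠ 0 by omega)]
  simp only [sub_eq_zero, Nat.cast_inj]
  split_ifs <;> ring

end TrigIntegrals

/-- The cosine series `∑ c j * cos ((n + j) t - θ)` starting at the frequency `n`. -/
noncomputable def cosKernel (c : ℕ → ℝ) (n : ℕ) (θ t : ℝ) : ℝ :=
  ∑' j, c j * cos ((n + j : ℕ) * t - θ)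

namespace cosKernel

variable {c : ℕ → ℝ}

lemma abs_mul_cos_le (x u : ℝ) : |x * cos u| ≤ |x| := by
  rw [abs_mul]
  exact mul_le_of_le_one_right (abs_nonneg x) (abs_cos_le_one u)

lemma continuous (hc : Summable c) (n : ℕ) (θ : ℝ) : Continuous (cosKernel c n θ) :=
  continuous_tsum (fun j ↦ by fun_prop) hc.abs fun j _ ↦ abs_mul_cos_le (c j) _

lemma abs_le_tsum (hc : Summable c) (hc0 : ∀ j, 0 ≤ c j) (n : ℕ) (θ t : ℝ) :
    |cosKernel c n θ t| ≤ ∑' j, c j := by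
  rw [cosKernel, ← norm_eq_abs]
  exact tsum_of_norm_bounded hc.hasSum fun j ↦
    (abs_mul_cos_le (c j) _).trans_eq (abs_of_nonneg (hc0 j))

lemma periodic (c : ℕ → ℝ) (n : ℕ) (θ : ℝ) : Function.Periodic (cosKernel c n θ) (2 * π) := by
  intro t
  refine tsum_congr fun j ↦ ?_
  rw [mul_add, add_sub_right_comm, cos_add_nat_mul_two_pi]

lemma neg_eq (c : ℕ → ℝ) (n : ℕ) (θ t : ℝ) : cosKernel c n θ (-t) = cosKernel c n (-θ) t :=
  tsum_congr fun j ↦ by rw [← cos_neg, neg_sub, mul_neg, sub_neg_eq_add, sub_neg_eq_add, add_comm]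

lemma eq_re_genFun (hc : Summable c) (n : ℕ) (θ t : ℝ) :
    cosKernel c n θ t =
      (Complex.exp (Complex.I * (n * t - θ : ℝ)) * genFun c (Complex.exp (Complex.I * t))).re := by
  have hz : ‖Complex.exp (Complex.I * t)‖ = 1 := Complex.norm_exp_I_mul_ofReal t
  rw [genFun, ← tsum_mul_left, Complex.re_tsum ((summable_genFun hc hz.le).mul_left _)]
  refine tsum_congr fun j ↦ ?_
  have hterm : Complex.exp (Complex.I * (n * t - θ : ℝ)) *
      (c j * Complex.exp (Complex.I * t) ^ j) =
        c j * Complex.exp (((n + j : ℕ) * t - θ : ℝ) * Complex.I) := by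
    rw [← Complex.exp_nat_mul, mul_left_comm, ← Complex.exp_add]
    push_cast
    ring_nf
  rw [hterm, Complex.re_ofReal_mul, Complex.exp_ofReal_mul_I_re]

end cosKernel

lemma hasSum_integral_tsum_mul {φ : ℝ → ℝ} {a b : ℝ} (hφ : IntervalIntegrable φ volume a b)
    {c : ℕ → ℝ} (hc : Summable c) {g : ℕ → ℝ → ℝ} (hg : ∀ j, Continuous (g j)) {M : ℝ}
    (hgM : ∀ j t, |g j t| ≤ M) :
    HasSum (fun j ↦ c j * ∫ t in a..b, g j t * φ t) (∫ t in a..b, (∑' j, c j * g j t) * φ t) := by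
  have hle : ∀ j t, ‖c j * g j t‖ ≤ |c j| * M := fun j t ↦ by
    rw [norm_mul]
    exact mul_le_mul_of_nonneg_left (hgM j t) (abs_nonneg _)
  have hsum : Summable fun j ↦ |c j| * M := hc.abs.mul_right M
  simp only [← intervalIntegral.integral_const_mul]
  refine intervalIntegral.hasSum_integral_of_dominated_convergence (fun j t ↦ |c j| * M * ‖φ t‖)
    (fun j ↦ ?_) (fun j ↦ ae_of_all _ fun t _ ↦ ?_)
    (ae_of_all _ fun t _ ↦ hsum.mul_right _) ?_ (ae_of_all _ fun t _ ↦ ?_)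
  · exact ((hg j).aestronglyMeasurable.mul hφ.def'.aestronglyMeasurable).const_mul _
  · rw [← mul_assoc, norm_mul]
    exact mul_le_mul_of_nonneg_right (hle j t) (norm_nonneg _)
  · simp only [tsum_mul_right]
    exact hφ.norm.const_mul _
  · simp only [← mul_assoc]
    exact ((Summable.of_norm_bounded hsum fun j ↦ hle j t).hasSum).mul_right _

lemma hasSum_integral_cosKernel_mul {φ : ℝ → ℝ} {a b : ℝ} (hφ : IntervalIntegrable φ volume a b)
    {c : ℕ → ℝ} (hc : Summable c) (n : ℕ) (θ : ℝ) {u : ℝ → ℝ} (hu : Continuous u) :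
    HasSum (fun j ↦ c j * ∫ t in a..b, cos ((n + j : ℕ) * u t - θ) * φ t)
      (∫ t in a..b, cosKernel c n θ (u t) * φ t) :=
  hasSum_integral_tsum_mul hφ hc (g := fun j t ↦ cos ((n + j : ℕ) * u t - θ))
    (fun j ↦ by fun_prop) (fun j t ↦ abs_cos_le_one _)

/-! ### Fourier sums of a convolution with a cosine series -/

/-- `∫_{-π}^{π} cos(k(x - t) - θ) φ(t) dt`, the `k`-th harmonic of a convolution with `φ`. -/
noncomputable def convHarmonic (φ : ℝ → ℝ) (θ : ℝ) (k : ℕ) (x : ℝ) : ℝ :=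
  ∫ t in -π..π, cos (k * (x - t) - θ) * φ t

section Harmonic

variable {φ : ℝ → ℝ}

lemma convHarmonic_eq_cos_add_sin (hφ : IntervalIntegrable φ volume (-π) π) (θ : ℝ)
    (k : ℕ) (x : ℝ) :
    convHarmonic φ θ k x =
      convHarmonic φ θ k 0 * cos (k * x) + convHarmonic φ (θ - π / 2) k 0 * sin (k * x) := by
  have hsplit : ∀ t, cos (k * (x - t) - θ) * φ t =
      cos (k * (0 - t) - θ) * φ t * cos (k * x) +
        cos (k * (0 - t) - (θ - π / 2)) * φ t * sin (k * x) := by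
    intro t
    rw [show k * (x - t) - θ = (k * (0 - t) - θ) + k * x by ring, cos_add, ← sub_add,
      cos_add_pi_div_two]
    ring
  have hint : ∀ θ d : ℝ,
      IntervalIntegrable (fun t ↦ cos (k * (0 - t) - θ) * φ t * d) volume (-π) π :=
    fun θ d ↦ (intervalIntegrable_continuous_mul hφ (by fun_prop)).mul_const d
  simp only [convHarmonic, hsplit]
  rw [intervalIntegral.integral_add (hint _ _) (hint _ _), intervalIntegral.integral_mul_const,
    intervalIntegral.integral_mul_const]

lemma continuous_convHarmonic (hφ : IntervalIntegrable φ volume (-π) π) (θ : ℝ) (k : ℕ) :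
    Continuous (convHarmonic φ θ k) := by
  rw [funext (convHarmonic_eq_cos_add_sin hφ θ k)]
  fun_prop

lemma abs_convHarmonic_le (hφ : IntervalIntegrable φ volume (-π) π) (θ : ℝ)
    (k : ℕ) (x : ℝ) : |convHarmonic φ θ k x| ≤ ∫ t in -π..π, |φ t| := by
  rw [convHarmonic, ← norm_eq_abs]
  refine intervalIntegral.norm_integral_le_of_norm_le (by linarith [pi_pos])
    (ae_of_all _ fun t _ ↦ ?_) hφ.abs
  rw [norm_mul]
  exact mul_le_of_le_one_left (norm_nonneg _) (abs_cos_le_one _)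

lemma integral_convHarmonic_mul_cos (hφ : IntervalIntegrable φ volume (-π) π) (θ : ℝ)
    (k : ℕ) {j : ℕ} (hj : j ≠ 0) (x : ℝ) :
    ∫ s in -π..π, convHarmonic φ θ j s * cos (k * s - k * x) =
      if j = k then π * convHarmonic φ θ k x else 0 := by
  have hsplit : ∀ s, convHarmonic φ θ j s * cos (k * s - k * x) =
      convHarmonic φ θ j 0 * (cos (j * s - 0) * cos (k * s - k * x)) +
        convHarmonic φ (θ - π / 2) j 0 * (cos (j * s - π / 2) * cos (k * s - k * x)) := by
    intro s
    rw [convHarmonic_eq_cos_add_sin hφ, sub_zero, cos_sub_pi_div_two]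
    ring
  have hint : ∀ d a : ℝ, IntervalIntegrable
      (fun s ↦ d * (cos (j * s - a) * cos (k * s - k * x))) volume (-π) π :=
    fun d a ↦ Continuous.intervalIntegrable (by fun_prop) _ _
  simp only [hsplit]
  rw [intervalIntegral.integral_add (hint _ _) (hint _ _), intervalIntegral.integral_const_mul,
    intervalIntegral.integral_const_mul, integral_cos_nat_mul_sub_mul_cos hj,
    integral_cos_nat_mul_sub_mul_cos hj]
  split_ifs with hjk
  · rw [zero_sub, cos_neg, cos_pi_div_two_sub, convHarmonic_eq_cos_add_sin hφ θ k x, hjk]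
    ring
  · ring

end Harmonic

lemma fourierCoefA_mul_cos_add_fourierCoefB_mul_sin {f : ℝ → ℝ} (hf : Continuous f) (k : ℕ)
    (x : ℝ) :
    fourierCoefA f k * cos (k * x) + fourierCoefB f k * sin (k * x) =
      1 / π * ∫ s in -π..π, f s * cos (k * s - k * x) := by
  have hsplit : ∀ s, f s * cos (k * s - k * x) =
      f s * cos (k * s) * cos (k * x) + f s * sin (k * s) * sin (k * x) := by
    intro s
    rw [cos_sub]
    ring
  simp only [hsplit]
  rw [intervalIntegral.integral_add (Continuous.intervalIntegrable (by fun_prop) _ _)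
    (Continuous.intervalIntegrable (by fun_prop) _ _), intervalIntegral.integral_mul_const,
    intervalIntegral.integral_mul_const, fourierCoefA, fourierCoefB]
  ring

section CosineConvolution

variable {φ f : ℝ → ℝ} {c : ℕ → ℝ} {a θ : ℝ}

lemma continuous_tsum_convHarmonic (hφ : IntervalIntegrable φ volume (-π) π) (hc : Summable c)
    (θ : ℝ) :
    Continuous fun x ↦ ∑' j, c j * convHarmonic φ θ (1 + j) x :=
  continuous_tsum (fun j ↦ (continuous_convHarmonic hφ θ _).const_mul _)
    (hc.abs.mul_right (∫ t in -π..π, |φ t|)) fun j x ↦ by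
      rw [norm_mul]
      exact mul_le_mul_of_nonneg_left (abs_convHarmonic_le hφ θ _ x) (abs_nonneg _)

lemma integral_mul_cos_eq_tsum (hφ : IntervalIntegrable φ volume (-π) π) (hc : Summable c)
    (hf : ∀ x, f x = a + 1 / π * ∑' j, c j * convHarmonic φ θ (1 + j) x) (k : ℕ) (x : ℝ) :
    ∫ s in -π..π, f s * cos (k * s - k * x) =
      (if k = 0 then 2 * π * a else 0) +
        ∑' j, c j * if 1 + j = k then convHarmonic φ θ k x else 0 := by
  have hcos : IntervalIntegrable (fun s ↦ cos (k * s - k * x)) volume (-π) π :=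
    Continuous.intervalIntegrable (by fun_prop) _ _
  have hsplit : ∀ s, f s * cos (k * s - k * x) = a * cos (k * s - k * x) +
      1 / π * ((∑' j, c j * convHarmonic φ θ (1 + j) s) * cos (k * s - k * x)) := by
    intro s
    rw [hf]
    ring
  have hconst : ∫ s in -π..π, cos (k * s - k * x) = if k = 0 then 2 * π else 0 := by
    have h := integral_cos_int_mul_sub k (k * x)
    simp only [Int.cast_natCast, Nat.cast_eq_zero] at h
    rw [h]
    split_ifs with hk <;> simp [hk]
  have hne (j : ℕ) : 1 + j ≠ 0 := by omega
  have hseries := (hasSum_integral_tsum_mul hcos hc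
    (fun j ↦ continuous_convHarmonic hφ θ (1 + j))
    (fun j ↦ abs_convHarmonic_le hφ θ (1 + j))).tsum_eq
  simp only [integral_convHarmonic_mul_cos hφ θ k (hne _)] at hseries
  simp only [hsplit]
  rw [intervalIntegral.integral_add (hcos.const_mul a)
    ((intervalIntegrable_continuous_mul hcos (continuous_tsum_convHarmonic hφ hc θ)).const_mul _),
    intervalIntegral.integral_const_mul, intervalIntegral.integral_const_mul, hconst, ← hseries,
    ← tsum_mul_left]
  congr 1
  · split_ifs <;> ring
  · refine tsum_congr fun j ↦ ?_
    split_ifs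
    · field_simp
    · ring

lemma fourierSum_eq_of_eq_tsum_convHarmonic (hφ : IntervalIntegrable φ volume (-π) π)
    (hc : Summable c)
    (hf : ∀ x, f x = a + 1 / π * ∑' j, c j * convHarmonic φ θ (1 + j) x) (m : ℕ) (x : ℝ) :
    fourierSum m f x = a + 1 / π * ∑ j ∈ Finset.range m, c j * convHarmonic φ θ (1 + j) x := by
  have hfc : Continuous f := by
    rw [funext hf]
    exact continuous_const.add ((continuous_tsum_convHarmonic hφ hc θ).const_mul _)
  have hcoef := integral_mul_cos_eq_tsum hφ hc hf
  have hzero : fourierCoefA f 0 / 2 = a := by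
    have h := fourierCoefA_mul_cos_add_fourierCoefB_mul_sin hfc 0 0
    rw [hcoef] at h
    simp only [CharP.cast_eq_zero, mul_zero, cos_zero, mul_one, sin_zero, add_zero, if_true,
      Nat.add_eq_zero_iff, one_ne_zero, false_and, if_false, tsum_zero] at h
    rw [h]
    field_simp
  have hsucc : ∀ j : ℕ, fourierCoefA f (1 + j) * cos ((1 + j : ℕ) * x) +
      fourierCoefB f (1 + j) * sin ((1 + j : ℕ) * x) =
        1 / π * (c j * convHarmonic φ θ (1 + j) x) := by
    intro j
    rw [fourierCoefA_mul_cos_add_fourierCoefB_mul_sin hfc, hcoef, if_neg (by omega),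
      tsum_eq_single j fun i hi ↦ by rw [if_neg (by omega), mul_zero], if_pos rfl, zero_add]
  rw [fourierSum, hzero, Finset.mul_sum, Finset.range_eq_Ico, ← Finset.Ico_succ_right_eq_Icc]
  congr 1
  rw [Finset.sum_Ico_eq_sum_range, Finset.range_eq_Ico]
  exact Finset.sum_congr rfl fun j _ ↦ hsucc j

theorem sub_fourierSum_eq_integral_cosKernel (hφ : IntervalIntegrable φ volume (-π) π)
    (hc : Summable c)
    (hf : ∀ x, f x = a + 1 / π * ∫ t in -π..π, cosKernel c 1 θ (x - t) * φ t) (m : ℕ) (x : ℝ) :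
    f x - fourierSum m f x =
      1 / π * ∫ t in -π..π, cosKernel (fun j ↦ c (m + j)) (m + 1) θ (x - t) * φ t := by
  have hseries : ∀ x, HasSum (fun j ↦ c j * convHarmonic φ θ (1 + j) x)
      (∫ t in -π..π, cosKernel c 1 θ (x - t) * φ t) :=
    fun x ↦ hasSum_integral_cosKernel_mul hφ hc 1 θ (by fun_prop)
  have htail : HasSum (fun j ↦ c (m + j) * convHarmonic φ θ (m + 1 + j) x)
      (∫ t in -π..π, cosKernel (fun j ↦ c (m + j)) (m + 1) θ (x - t) * φ t) :=
    hasSum_integral_cosKernel_mul hφ (hc.comp_injective (add_right_injective m)) (m + 1) θ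
      (by fun_prop)
  have hsplit := (hseries x).summable.sum_add_tsum_nat_add m
  simp only [add_comm _ m, ← add_assoc 1 m, htail.tsum_eq] at hsplit
  have hf' : ∀ x, f x = a + 1 / π * ∑' j, c j * convHarmonic φ θ (1 + j) x :=
    fun x ↦ by rw [hf, (hseries x).tsum_eq]
  rw [fourierSum_eq_of_eq_tsum_convHarmonic hφ hc hf', hf', ← hsplit]
  ring

end CosineConvolution

/-! ### Almost everywhere nonvanishing of cosine series with completely monotone coefficients -/

lemma ae_of_periodic_of_ae_restrict_Ioc {p : ℝ → Prop} {T : ℝ} (hT : 0 < T)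
    (hp : Function.Periodic p T) {a : ℝ} (h : ∀ᵐ t ∂volume.restrict (Set.Ioc a (a + T)), p t) :
    ∀ᵐ t, p t := by
  refine (isAddFundamentalDomain_Ioc hT a).measure_zero_of_invariant {t | ¬ p t} ?_ ?_
  · rintro ⟨_, m, rfl⟩
    ext t
    simp only [Set.mem_vadd_set_iff_neg_vadd_mem, Set.mem_ofPred_eq]
    rw [AddSubgroup.vadd_def, AddSubgroup.coe_neg, vadd_eq_add, add_comm, ← sub_eq_add_neg,
      hp.sub_zsmul_eq m]
  · rwa [ae_iff, Measure.restrict_apply' measurableSet_Ioc] at h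

lemma norm_exp_lt_norm_two_sub_exp {t : ℝ} (ht : cos t ≠ 1) :
    ‖Complex.exp (Complex.I * t)‖ < ‖2 - Complex.exp (Complex.I * t)‖ := by
  have hcos : cos t < 1 := lt_of_le_of_ne (cos_le_one t) ht
  rw [← sq_lt_sq₀ (norm_nonneg _) (norm_nonneg _), Complex.norm_exp_I_mul_ofReal, mul_comm,
    ← Complex.normSq_eq_norm_sq, Complex.normSq_apply, Complex.sub_re, Complex.sub_im,
    Complex.exp_ofReal_mul_I_re, Complex.exp_ofReal_mul_I_im, Complex.re_ofNat, Complex.im_ofNat]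
  nlinarith [sin_sq_add_cos_sq t]

namespace cosKernel

variable {c : ℕ → ℝ}

lemma analyticAt (hc : CompletelyMonotone c) (hcs : Summable c) (n : ℕ) (θ : ℝ) {t : ℝ}
    (ht : cos t ≠ 1) : AnalyticAt ℝ (cosKernel c n θ) t := by
  have hexp : ∀ {u : ℝ → ℂ}, AnalyticAt ℝ u t → AnalyticAt ℝ (fun s ↦ Complex.exp (u s)) t :=
    fun hu ↦ (Complex.differentiable_exp.analyticAt _).restrictScalars.comp hu
  have hid : AnalyticAt ℝ (fun s : ℝ ↦ (s : ℂ)) t := Complex.ofRealCLM.analyticAt t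
  have hphase : AnalyticAt ℝ (fun s : ℝ ↦ Complex.exp (Complex.I * (n * s - θ : ℝ))) t := by
    push_cast
    exact hexp (analyticAt_const.mul ((analyticAt_const.mul hid).sub analyticAt_const))
  have hz := hexp (analyticAt_const (v := Complex.I).mul hid)
  have hden : AnalyticAt ℝ (fun s : ℝ ↦ 2 - Complex.exp (Complex.I * s)) t :=
    analyticAt_const.sub hz
  have hlt := norm_exp_lt_norm_two_sub_exp ht
  have hne : 2 - Complex.exp (Complex.I * t) ≠ 0 :=
    norm_pos_iff.1 ((norm_nonneg _).trans_lt hlt)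
  have hseries : AnalyticAt ℝ (genFun (eulerCoeff c))
      (Complex.exp (Complex.I * t) / (2 - Complex.exp (Complex.I * t))) := by
    refine (hc.analyticOnNhd_genFun_eulerCoeff _ ?_).restrictScalars
    rwa [mem_ball_zero_iff, norm_div, div_lt_one (norm_pos_iff.2 hne)]
  have hprod := hphase.mul ((analyticAt_const (v := (2 : ℂ)).div hden hne).mul
    (hseries.comp_of_eq (hz.div hden hne) rfl))
  refine ((Complex.reCLM.analyticAt _).comp hprod).congr ?_
  filter_upwards [continuous_cos.continuousAt.eventually_ne ht] with s hs
  rw [eq_re_genFun hcs, hc.genFun_eq_genFun_eulerCoeff hcs (Complex.norm_exp_I_mul_ofReal s).le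
    (norm_exp_lt_norm_two_sub_exp hs)]
  rfl

lemma integral_mul_cos (hc : Summable c) {n : ℕ} (hn : n ≠ 0) (θ : ℝ) :
    ∫ t in -π..π, cosKernel c n θ t * cos (n * t - θ) = π * c 0 := by
  have hseries := hasSum_integral_cosKernel_mul (φ := fun t ↦ cos (n * t - θ))
    (Continuous.intervalIntegrable (by fun_prop) (-π) π) hc n θ continuous_id
  simp only [id_eq] at hseries
  have hterm : ∀ j, c j * ∫ t in -π..π, cos ((n + j : ℕ) * t - θ) * cos (n * t - θ) =
      if j = 0 then π * c 0 else 0 := by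
    intro j
    rw [integral_cos_nat_mul_sub_mul_cos (by omega)]
    simp only [Nat.add_eq_left, sub_self, cos_zero, mul_one, mul_ite, mul_zero]
    split_ifs with hj
    · rw [hj, mul_comm]
    · rfl
  rw [← hseries.tsum_eq]
  simp only [hterm, tsum_ite_eq]

lemma exists_ne_zero (hc : Summable c) (hc0 : c 0 ≠ 0) {n : ℕ} (hn : n ≠ 0) (θ : ℝ) :
    ∃ t ∈ Set.Ioo 0 (2 * π), cosKernel c n θ t ≠ 0 := by
  by_contra! hzero
  have hae : ∀ᵐ t, cosKernel c n θ t = 0 := by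
    refine ae_of_periodic_of_ae_restrict_Ioc two_pi_pos (a := 0)
      (fun t ↦ by simp only [periodic c n θ t]) ?_
    rw [zero_add, ← restrict_Ioo_eq_restrict_Ioc]
    exact (ae_restrict_iff' measurableSet_Ioo).2 (ae_of_all _ hzero)
  have hint : ∫ t in -π..π, cosKernel c n θ t * cos (n * t - θ) = 0 := by
    refine intervalIntegral.integral_zero_ae ?_
    filter_upwards [hae] with t ht _
    rw [ht, zero_mul]
  rw [integral_mul_cos hc hn] at hint
  exact mul_ne_zero pi_ne_zero hc0 hint

theorem ae_ne_zero (hc : CompletelyMonotone c) (hcs : Summable c) (hc0 : c 0 ≠ 0) {n : ℕ}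
    (hn : n ≠ 0) (θ : ℝ) : ∀ᵐ t, cosKernel c n θ t ≠ 0 := by
  have hcos : ∀ t ∈ Set.Ioo 0 (2 * π), cos t ≠ 1 := fun t ht h ↦
    ht.1.ne' ((cos_eq_one_iff_of_lt_of_lt (by linarith [ht.1, pi_pos]) ht.2).1 h)
  obtain ⟨t, ht, hne⟩ := exists_ne_zero hcs hc0 hn θ
  have hanalytic : AnalyticOnNhd ℝ (cosKernel c n θ) (Set.Ioo 0 (2 * π)) :=
    fun s hs ↦ analyticAt hc hcs n θ (hcos s hs)
  have hcodiscrete := hanalytic.preimage_zero_mem_codiscreteWithin hne ht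
    (isConnected_Ioo two_pi_pos)
  refine ae_of_periodic_of_ae_restrict_Ioc two_pi_pos (a := 0)
    (fun s ↦ by simp only [periodic c n θ s]) ?_
  rw [zero_add, ← restrict_Ioo_eq_restrict_Ioc]
  exact ae_restrict_le_codiscreteWithin measurableSet_Ioo hcodiscrete

end cosKernel

/-! ### Asymptotics of cosine series with convex coefficients -/

lemma one_sub_exp_I_mul (t : ℝ) :
    1 - Complex.exp (Complex.I * t) =
      -(2 * sin (t / 2) * Complex.I) * Complex.exp (Complex.I * (t / 2 : ℝ)) := by
  have hsq : Complex.exp (Complex.I * t) = Complex.exp (Complex.I * (t / 2 : ℝ)) ^ 2 := by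
    rw [← Complex.exp_nat_mul]
    congr 1
    push_cast
    ring
  rw [hsq, mul_comm Complex.I, Complex.exp_mul_I, ← Complex.ofReal_sin, ← Complex.ofReal_cos]
  have hpyth : (sin (t / 2) : ℂ) ^ 2 + (cos (t / 2) : ℂ) ^ 2 = 1 := by
    exact_mod_cast sin_sq_add_cos_sq (t / 2)
  linear_combination -hpyth + (sin (t / 2) : ℂ) ^ 2 * Complex.I_sq

lemma re_exp_div_one_sub_exp (n θ t : ℝ) :
    (Complex.exp (Complex.I * (n * t - θ : ℝ)) / (1 - Complex.exp (Complex.I * t))).re =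
      -(sin ((n - 1 / 2) * t - θ) / (2 * sin (t / 2))) := by
  have hsplit : Complex.exp (Complex.I * (n * t - θ : ℝ)) =
      Complex.exp (((n - 1 / 2) * t - θ : ℝ) * Complex.I) *
        Complex.exp (Complex.I * (t / 2 : ℝ)) := by
    rw [← Complex.exp_add]
    congr 1
    push_cast
    ring
  have hquot : Complex.exp (Complex.I * (n * t - θ : ℝ)) / (1 - Complex.exp (Complex.I * t)) =
      (1 / (2 * sin (t / 2)) : ℝ) *
        (Complex.exp (((n - 1 / 2) * t - θ : ℝ) * Complex.I) * Complex.I) := by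
    rw [one_sub_exp_I_mul, hsplit, mul_div_mul_right _ _ (Complex.exp_ne_zero _), div_neg,
      ← div_div, Complex.div_I]
    push_cast
    ring
  rw [hquot, Complex.re_ofReal_mul, Complex.mul_I_re, Complex.exp_ofReal_mul_I_im]
  ring

lemma div_pi_le_sin_half {t : ℝ} (ht0 : 0 ≤ t) (ht : t ≤ π) : t / π ≤ sin (t / 2) :=
  calc t / π = 2 / π * (t / 2) := by ring
    _ ≤ sin (t / 2) := mul_le_sin (by linarith) (by linarith)

lemma abs_inv_two_mul_sin_half_sub_inv_le_one {t : ℝ} (ht0 : 0 < t) (ht : t ≤ π) :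
    |1 / (2 * sin (t / 2)) - 1 / t| ≤ 1 := by
  have hlower := div_pi_le_sin_half ht0.le ht
  have hsin : 0 < sin (t / 2) := (div_pos ht0 pi_pos).trans_le hlower
  have hcube : t / 2 - (t / 2) ^ 3 / 6 ≤ sin (t / 2) := (sin_gt_sub_cube (by linarith)).le
  have hupper : sin (t / 2) ≤ t / 2 := sin_le (by linarith)
  have hpi : t / 24 ≤ 2 / π := by
    rw [div_le_div_iff₀ (by norm_num) pi_pos]
    nlinarith [pi_lt_four, pi_pos]
  have hcombine : 1 / (2 * sin (t / 2)) - 1 / t =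
      (t - 2 * sin (t / 2)) / (2 * sin (t / 2) * t) := by
    field_simp
  rw [hcombine, abs_of_nonneg (div_nonneg (by linarith) (by positivity)),
    div_le_one (by positivity)]
  calc t - 2 * sin (t / 2) ≤ t ^ 2 * (t / 24) := by linarith
    _ ≤ t ^ 2 * (2 / π) := by gcongr
    _ = 2 * (t / π) * t := by ring
    _ ≤ 2 * sin (t / 2) * t := by gcongr

lemma norm_genFun_sub_div_le {c : ℕ → ℝ} (hc : Summable c) (hconvex : Antitone (negDiff c))
    {z : ℂ} (hz : ‖z‖ ≤ 1) (hz1 : z ≠ 1) :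
    ‖genFun c z - c 0 / (1 - z)‖ ≤ 2 * negDiff c 0 / ‖1 - z‖ ^ 2 := by
  have hne : 1 - z ≠ 0 := sub_ne_zero.2 hz1.symm
  have habel := one_sub_mul_genFun hc hz
  have hremainder : genFun c z - c 0 / (1 - z) =
      -(z * ((1 - z) * genFun (negDiff c) z)) / (1 - z) ^ 2 := by
    field_simp
    linear_combination habel
  rw [hremainder, norm_div, norm_neg, norm_mul, norm_pow]
  refine div_le_div_of_nonneg_right ?_ (sq_nonneg _)
  exact (mul_le_of_le_one_left (norm_nonneg _) hz).trans
    (norm_one_sub_mul_genFun_le hconvex (hasSum_negDiff hc).summable hz)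

/- Two summations by parts: the first isolates `c 0 / (1 - z)` with `z = exp (I t)`, the second
bounds the remainder by the first difference of `c`. -/
theorem cosKernel.abs_add_sin_div_le {c : ℕ → ℝ} (hc : Summable c)
    (hconvex : Antitone (negDiff c)) (n : ℕ) (θ : ℝ) {t : ℝ} (ht0 : 0 < t) (ht : t ≤ π) :
    |cosKernel c n θ t + c 0 * (sin ((n - 1 / 2) * t - θ) / t)| ≤
      π ^ 2 * negDiff c 0 / 2 * (1 / t ^ 2) + c 0 := by
  have hdiff := nonneg_of_antitone_of_summable hconvex (hasSum_negDiff hc).summable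
  have hc0 : 0 ≤ c 0 := (hasSum_negDiff hc).nonneg hdiff
  have hlower := div_pi_le_sin_half ht0.le ht
  have hsin : 0 < sin (t / 2) := (div_pos ht0 pi_pos).trans_le hlower
  set z := Complex.exp (Complex.I * t)
  set w := Complex.exp (Complex.I * (n * t - θ : ℝ))
  set s := sin ((n - 1 / 2) * t - θ)
  have hz : ‖1 - z‖ = 2 * sin (t / 2) := by
    rw [norm_sub_rev, Complex.norm_exp_I_mul_ofReal_sub_one, norm_of_nonneg (by positivity)]
  have hz1 : z ≠ 1 := fun h ↦ by
    rw [h, sub_self, norm_zero] at hz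
    linarith
  have hremainder : |(w * (genFun c z - c 0 / (1 - z))).re| ≤
      π ^ 2 * negDiff c 0 / 2 * (1 / t ^ 2) :=
    calc |(w * (genFun c z - c 0 / (1 - z))).re| ≤ ‖genFun c z - c 0 / (1 - z)‖ := by
          refine (Complex.abs_re_le_norm _).trans ?_
          rw [norm_mul, Complex.norm_exp_I_mul_ofReal, one_mul]
      _ ≤ 2 * negDiff c 0 / (2 * sin (t / 2)) ^ 2 :=
          hz ▸ norm_genFun_sub_div_le hc hconvex (Complex.norm_exp_I_mul_ofReal t).le hz1
      _ ≤ 2 * negDiff c 0 / (2 * (t / π)) ^ 2 := by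
          have := hdiff 0
          gcongr
      _ = π ^ 2 * negDiff c 0 / 2 * (1 / t ^ 2) := by field_simp
  have hsine : |c 0 * (s * (1 / (2 * sin (t / 2)) - 1 / t))| ≤ c 0 := by
    rw [abs_mul, abs_of_nonneg hc0, abs_mul]
    exact mul_le_of_le_one_right hc0 (mul_le_one₀ (abs_sin_le_one _) (abs_nonneg _)
      (abs_inv_two_mul_sin_half_sub_inv_le_one ht0 ht))
  have hdecomp : cosKernel c n θ t + c 0 * (s / t) =
      (w * (genFun c z - c 0 / (1 - z))).re - c 0 * (s * (1 / (2 * sin (t / 2)) - 1 / t)) := by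
    have hsplit : w * genFun c z = w * (genFun c z - c 0 / (1 - z)) + c 0 * (w / (1 - z)) := by
      ring
    rw [cosKernel.eq_re_genFun hc, hsplit, Complex.add_re, Complex.re_ofReal_mul,
      re_exp_div_one_sub_exp]
    ring
  rw [hdecomp]
  exact (abs_sub _ _).trans (add_le_add hremainder hsine)

/-! ### Decay of the weights -/

section ExpWeight

variable {α r n : ℝ}

lemma summable_expWeight (hα : 0 < α) (hr : 0 < r) (n : ℝ) : Summable (expWeight α r n) := by
  have hshift : Tendsto (fun j : ℕ ↦ n + j) atTop atTop :=
    tendsto_atTop_add_const_left _ _ tendsto_natCast_atTop_atTop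
  have hdecay := (isLittleO_exp_neg_mul_rpow_atTop hα (-2 / r)).comp_tendsto
    ((tendsto_rpow_atTop hr).comp hshift)
  refine summable_of_isBigO_nat ((Real.summable_one_div_nat_add_rpow n 2).2 one_lt_two)
    (hdecay.isBigO.congr' .rfl ?_)
  filter_upwards [hshift.eventually_gt_atTop 0] with j hj
  simp only [Function.comp_apply]
  rw [← rpow_mul hj.le, mul_div_cancel₀ _ hr.ne', rpow_neg hj.le, add_comm,
    abs_of_pos (by linarith), one_div]

lemma expWeight_le_mul_rpow (hα : 0 ≤ α) (hn : 0 < n) (j : ℕ) :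
    expWeight α r n j ≤ expWeight α r n 0 * (1 + j / n) ^ (-(α * r * n ^ r)) := by
  have hu : 0 < 1 + j / n := by positivity
  have hfactor : (n + j) ^ r = n ^ r * (1 + j / n) ^ r := by
    rw [← mul_rpow hn.le hu.le, mul_add, mul_one, mul_div_cancel₀ _ hn.ne']
  have hlog : 1 + r * log (1 + j / n) ≤ (1 + j / n) ^ r := by
    rw [rpow_def_of_pos hu]
    linarith [add_one_le_exp (log (1 + j / n) * r)]
  have hscaled := mul_le_mul_of_nonneg_left hlog (by positivity : 0 ≤ α * n ^ r)
  rw [expWeight, expWeight, rpow_def_of_pos hu, ← exp_add, hfactor, Nat.cast_zero, add_zero]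
  exact exp_le_exp.2 (by linarith)

lemma expWeight_le_div_sq (hα : 0 ≤ α) (hn : 0 < n) (hlarge : 2 ≤ α * r * n ^ r) (j : ℕ) :
    expWeight α r n j ≤
      expWeight α r n 0 * (1 / (1 + α * r * n ^ (r - 1) / 2 * j) ^ 2) := by
  have hu : 0 ≤ j / n := by positivity
  have hbernoulli : 1 + α * r * n ^ (r - 1) / 2 * j ≤ (1 + j / n) ^ (α * r * n ^ r / 2) := by
    refine Eq.trans_le ?_ (one_add_mul_self_le_rpow_one_add (by linarith) (by linarith))
    rw [rpow_sub_one hn.ne']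
    ring
  have hbase : 0 < 1 + α * r * n ^ (r - 1) / 2 * j := by
    have hrate : α * r * n ^ (r - 1) * n = α * r * n ^ r := by
      rw [mul_assoc, ← rpow_add_one hn.ne', sub_add_cancel]
    have : 0 < α * r * n ^ (r - 1) := pos_of_mul_pos_left (by linarith) hn.le
    positivity
  refine (expWeight_le_mul_rpow hα hn j).trans (mul_le_mul_of_nonneg_left ?_ (exp_pos _).le)
  rw [rpow_neg (by positivity), ← one_div]
  refine one_div_le_one_div_of_le (by positivity) ?_
  calc (1 + α * r * n ^ (r - 1) / 2 * j) ^ 2 ≤ ((1 + j / n) ^ (α * r * n ^ r / 2)) ^ 2 := by gcongr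
    _ = (1 + j / n) ^ (α * r * n ^ r) := by
      rw [← rpow_natCast, ← rpow_mul (by positivity)]
      congr 1
      push_cast
      ring

lemma sum_range_one_div_one_add_mul_sq_le {b : ℝ} (hb : 0 < b) (m : ℕ) :
    ∑ j ∈ Finset.range m, 1 / (1 + b * j) ^ 2 ≤ 1 + 1 / b := by
  have htelescope (j : ℕ) : 1 / (1 + b * j) ^ 2 ≤
      (1 + 1 / b) * (1 / (1 + b * j) - 1 / (1 + b * (j + 1 : ℕ))) := by
    have hquot : (1 + 1 / b) * (1 / (1 + b * j) - 1 / (1 + b * (j + 1 : ℕ))) =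
        (1 + b) / ((1 + b * j) * (1 + b * (j + 1 : ℕ))) := by
      push_cast
      field_simp
      ring
    have hb2 : 0 ≤ (1 + b * j) * (b * b * j) := by positivity
    rw [hquot, div_le_div_iff₀ (by positivity) (by positivity)]
    push_cast
    linarith
  calc ∑ j ∈ Finset.range m, 1 / (1 + b * j) ^ 2
      ≤ ∑ j ∈ Finset.range m, (1 + 1 / b) * (1 / (1 + b * j) - 1 / (1 + b * (j + 1 : ℕ))) :=
        Finset.sum_le_sum fun j _ ↦ htelescope j
    _ = (1 + 1 / b) * (1 - 1 / (1 + b * m)) := by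
        rw [← Finset.mul_sum, Finset.sum_range_sub' fun j : ℕ ↦ 1 / (1 + b * j)]
        simp
    _ ≤ 1 + 1 / b :=
        mul_le_of_le_one_right (by positivity) (sub_le_self _ (by positivity))

lemma tsum_expWeight_le (hα : 0 < α) (hr : 0 < r) (hn : 0 < n) (hlarge : 2 ≤ α * r * n ^ r)
    (hsmall : α * r * n ^ (r - 1) ≤ 1) :
    ∑' j, expWeight α r n j ≤ expWeight α r n 0 * (3 / (α * r * n ^ (r - 1))) := by
  set y := α * r * n ^ (r - 1)
  have hy : 0 < y := by positivity
  refine Real.tsum_le_of_sum_range_le (fun j ↦ (exp_pos _).le) fun m ↦ ?_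
  calc ∑ j ∈ Finset.range m, expWeight α r n j
      ≤ ∑ j ∈ Finset.range m, expWeight α r n 0 * (1 / (1 + y / 2 * j) ^ 2) :=
        Finset.sum_le_sum fun j _ ↦ expWeight_le_div_sq hα.le hn hlarge j
    _ ≤ expWeight α r n 0 * (1 + 1 / (y / 2)) := by
        rw [← Finset.mul_sum]
        exact mul_le_mul_of_nonneg_left
          (sum_range_one_div_one_add_mul_sq_le (half_pos hy) m) (exp_pos _).le
    _ ≤ expWeight α r n 0 * (3 / y) := by
        refine mul_le_mul_of_nonneg_left ?_ (exp_pos _).le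
        have hone : 1 ≤ 1 / y := (one_le_div hy).2 hsmall
        calc 1 + 1 / (y / 2) = 1 + 2 * (1 / y) := by field_simp
          _ ≤ 3 * (1 / y) := by linarith
          _ = 3 / y := mul_one_div _ _

lemma negDiff_expWeight_zero_le (hα : 0 ≤ α) (hr0 : 0 ≤ r) (hr1 : r ≤ 1) (hn : 0 < n) :
    negDiff (expWeight α r n) 0 ≤ expWeight α r n 0 * (α * r * n ^ (r - 1)) := by
  have hbernoulli : (n + 1) ^ r ≤ n ^ r + r * n ^ (r - 1) :=
    calc (n + 1) ^ r = n ^ r * (1 + 1 / n) ^ r := by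
          rw [← mul_rpow hn.le (by positivity), mul_add, mul_one, mul_one_div_cancel hn.ne']
      _ ≤ n ^ r * (1 + r * (1 / n)) := by
          gcongr
          exact rpow_one_add_le_one_add_mul_self (by linarith [one_div_pos.2 hn]) hr0 hr1
      _ = n ^ r + r * n ^ (r - 1) := by
          rw [rpow_sub_one hn.ne']
          ring
  have hratio : expWeight α r n 0 * exp (-(α * r * n ^ (r - 1))) ≤ expWeight α r n 1 := by
    simp only [expWeight, Nat.cast_zero, add_zero, Nat.cast_one, ← exp_add]
    refine exp_le_exp.2 ?_
    linarith [mul_le_mul_of_nonneg_left hbernoulli hα]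
  have hexp := mul_le_mul_of_nonneg_left (add_one_le_exp (-(α * r * n ^ (r - 1))))
    (exp_pos (-α * (n + (0 : ℕ)) ^ r)).le
  rw [← expWeight] at hexp
  simp only [negDiff, zero_add]
  linarith

end ExpWeight

/-! ### Oscillatory integrals -/

section Periodic

variable {g : ℝ → ℝ} {T M : ℝ}

lemma abs_integral_le_of_periodic_of_integral_eq_zero (hT : 0 < T) (hg : Function.Periodic g T)
    (hi : ∀ a b, IntervalIntegrable g volume a b) (hM : ∀ t, |g t| ≤ M)
    (h0 : ∫ t in 0..T, g t = 0) (a b : ℝ) : |∫ t in a..b, g t| ≤ M * T := by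
  set k : ℤ := ⌊(b - a) / T⌋
  have hlower : k * T ≤ b - a := (le_div_iff₀ hT).1 (Int.floor_le _)
  have hupper : b - a < (k + 1) * T := (div_lt_iff₀ hT).1 (Int.lt_floor_add_one _)
  have hwhole : ∫ t in a..a + k • T, g t = 0 := by
    rw [hg.intervalIntegral_add_zsmul_eq k a hi, hg.intervalIntegral_add_eq a 0, zero_add, h0,
      smul_zero]
  have hrest := intervalIntegral.norm_integral_le_of_norm_le_const (f := g) (a := a + k • T)
    (b := b) fun t _ ↦ hM t
  have hlength : |b - (a + k • T)| ≤ T := by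
    rw [zsmul_eq_mul, abs_of_nonneg (by linarith)]
    linarith
  rw [← intervalIntegral.integral_add_adjacent_intervals (hi a (a + k • T)) (hi _ b), hwhole,
    zero_add]
  exact hrest.trans (mul_le_mul_of_nonneg_left hlength ((abs_nonneg _).trans (hM 0)))

lemma abs_integral_comp_mul_sub_le_of_periodic (hT : 0 < T) (hg : Function.Periodic g T)
    (hi : ∀ a b, IntervalIntegrable g volume a b) (hM : ∀ t, |g t| ≤ M)
    (h0 : ∫ t in 0..T, g t = 0) {N : ℝ} (hN : 0 < N) (θ a b : ℝ) :
    |∫ t in a..b, g (N * t - θ)| ≤ M * T / N := by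
  rw [intervalIntegral.integral_comp_mul_sub (fun t ↦ g t) hN.ne' θ, smul_eq_mul, abs_mul,
    abs_of_pos (inv_pos.2 hN), inv_mul_eq_div]
  exact div_le_div_of_nonneg_right
    (abs_integral_le_of_periodic_of_integral_eq_zero hT hg hi hM h0 _ _) hN.le

end Periodic

section OneDiv

variable {a b : ℝ}

lemma hasDerivAt_one_div {t : ℝ} (ht : t ≠ 0) :
    HasDerivAt (fun t : ℝ ↦ 1 / t) (-(1 / t ^ 2)) t := by
  simpa only [one_div] using hasDerivAt_inv ht

lemma pos_of_mem_uIcc (ha : 0 < a) (hab : a ≤ b) {t : ℝ} (ht : t ∈ Set.uIcc a b) : 0 < t := by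
  rw [Set.uIcc_of_le hab] at ht
  exact ha.trans_le ht.1

lemma intervalIntegrable_one_div_sq (ha : 0 < a) (hab : a ≤ b) :
    IntervalIntegrable (fun t : ℝ ↦ 1 / t ^ 2) volume a b :=
  (continuousOn_const.div (by fun_prop)
    fun _ ht ↦ pow_ne_zero 2 (pos_of_mem_uIcc ha hab ht).ne').intervalIntegrable

lemma integral_one_div_sq (ha : 0 < a) (hab : a ≤ b) : ∫ t in a..b, 1 / t ^ 2 = 1 / a - 1 / b := by
  have h := intervalIntegral.integral_eq_sub_of_hasDerivAt
    (fun _ ht ↦ hasDerivAt_one_div (pos_of_mem_uIcc ha hab ht).ne')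
    (intervalIntegrable_one_div_sq ha hab).neg
  rw [intervalIntegral.integral_neg] at h
  linarith

lemma abs_integral_one_div_mul_le {g : ℝ → ℝ} (hg : Continuous g) (ha : 0 < a) (hab : a ≤ b)
    {C : ℝ} (hC : ∀ t, |∫ s in a..t, g s| ≤ C) : |∫ t in a..b, 1 / t * g t| ≤ C * (1 / a) := by
  set G : ℝ → ℝ := fun t ↦ ∫ s in a..t, g s
  have hsq := intervalIntegrable_one_div_sq ha hab
  have hparts := intervalIntegral.integral_mul_deriv_eq_deriv_mul (u := fun t : ℝ ↦ 1 / t) (v := G)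
    (fun _ ht ↦ hasDerivAt_one_div (pos_of_mem_uIcc ha hab ht).ne')
    (fun t _ ↦ intervalIntegral.integral_hasDerivAt_right (hg.intervalIntegrable _ _)
      (hg.stronglyMeasurableAtFilter _ _) hg.continuousAt)
    hsq.neg (hg.intervalIntegrable _ _)
  have hboundary : |1 / b * G b| ≤ C * (1 / b) := by
    have hb : 0 ≤ 1 / b := (one_div_pos.2 (ha.trans_le hab)).le
    rw [abs_mul, abs_of_nonneg hb, mul_comm]
    exact mul_le_mul_of_nonneg_right (hC b) hb
  have hinterior : |∫ t in a..b, -(1 / t ^ 2) * G t| ≤ C * (1 / a - 1 / b) := by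
    rw [← integral_one_div_sq ha hab, ← intervalIntegral.integral_const_mul, ← norm_eq_abs]
    refine intervalIntegral.norm_integral_le_of_norm_le hab (ae_of_all _ fun t _ ↦ ?_)
      (hsq.const_mul _)
    rw [norm_mul, norm_neg, norm_of_nonneg (by positivity), mul_comm]
    exact mul_le_mul_of_nonneg_right (hC t) (by positivity)
  rw [hparts, show G a = 0 from intervalIntegral.integral_same, mul_zero, sub_zero]
  linarith [abs_sub (1 / b * G b) (∫ t in a..b, -(1 / t ^ 2) * G t)]

end OneDiv

lemma integral_abs_sin_sub_two_div_pi : ∫ t in 0..π, (|sin t| - 2 / π) = 0 := by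
  have habs : ∫ t in 0..π, |sin t| = 2 := by
    have hsin : ∫ t in 0..π, |sin t| = ∫ t in 0..π, sin t := by
      refine intervalIntegral.integral_congr fun t ht ↦ abs_of_nonneg (sin_nonneg_of_mem_Icc ?_)
      rwa [Set.uIcc_of_le pi_pos.le] at ht
    rw [hsin, integral_sin, cos_zero, cos_pi]
    norm_num
  rw [intervalIntegral.integral_sub (continuous_sin.abs.intervalIntegrable _ _)
    intervalIntegrable_const, habs, intervalIntegral.integral_const, smul_eq_mul, sub_zero,
    mul_div_cancel₀ _ pi_ne_zero, sub_self]

lemma abs_integral_abs_sin_sub_two_div_pi_le {N : ℝ} (hN : 0 < N) (θ a b : ℝ) :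
    |∫ t in a..b, (|sin (N * t - θ)| - 2 / π)| ≤ π / N := by
  have hbound (t : ℝ) : |(|sin t| - 2 / π)| ≤ 1 := by
    have h2 : 2 / π ≤ 1 := (div_le_one pi_pos).2 two_le_pi
    have h0 : 0 < 2 / π := div_pos two_pos pi_pos
    rw [abs_le]
    constructor <;> linarith [abs_nonneg (sin t), abs_sin_le_one t]
  have hperiodic : Function.Periodic (fun t ↦ |sin t| - 2 / π) π := fun t ↦ by
    simp only [sin_add_pi, abs_neg]
  simpa only [one_mul] using abs_integral_comp_mul_sub_le_of_periodic pi_pos hperiodic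
    (fun a b ↦ (continuous_sin.abs.sub continuous_const).intervalIntegrable a b) hbound
    integral_abs_sin_sub_two_div_pi hN θ a b

lemma intervalIntegrable_abs_sin_div {a b : ℝ} (ha : 0 < a) (hab : a ≤ b) (N θ : ℝ) :
    IntervalIntegrable (fun t ↦ |sin (N * t - θ)| / t) volume a b :=
  ((by fun_prop : Continuous fun t ↦ |sin (N * t - θ)|).continuousOn.div continuousOn_id
    fun _ ht ↦ (pos_of_mem_uIcc ha hab ht).ne').intervalIntegrable

theorem abs_integral_abs_sin_div_sub_log_le {N : ℝ} (hN : 0 < N) (θ : ℝ) {a b : ℝ} (ha : 0 < a)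
    (hab : a ≤ b) :
    |(∫ t in a..b, |sin (N * t - θ)| / t) - 2 / π * log (b / a)| ≤ π / N * (1 / a) := by
  have hne {t : ℝ} (ht : t ∈ Set.uIcc a b) : t ≠ 0 := (pos_of_mem_uIcc ha hab ht).ne'
  have hsplit : ∫ t in a..b, 1 / t * (|sin (N * t - θ)| - 2 / π) =
      (∫ t in a..b, |sin (N * t - θ)| / t) - 2 / π * log (b / a) := by
    rw [← integral_one_div_of_pos ha (ha.trans_le hab), ← intervalIntegral.integral_const_mul,
      ← intervalIntegral.integral_sub (intervalIntegrable_abs_sin_div ha hab N θ)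
        ((intervalIntegral.intervalIntegrable_one_div (fun _ ↦ hne) continuousOn_id).const_mul _)]
    congr 1 with t
    ring
  rw [← hsplit]
  exact abs_integral_one_div_mul_le (by fun_prop) ha hab
    fun t ↦ abs_integral_abs_sin_sub_two_div_pi_le hN θ a t

lemma measurable_real_sign : Measurable Real.sign :=
  Measurable.ite measurableSet_Iio measurable_const
    (Measurable.ite measurableSet_Ioi measurable_const measurable_const)

lemma abs_sign_le_one (x : ℝ) : |Real.sign x| ≤ 1 := by
  rcases sign_apply_eq x with h | h | h <;> simp [h]

lemma intervalIntegrable_of_abs_le {f : ℝ → ℝ} (hf : Measurable f) {M : ℝ} (hM : ∀ t, |f t| ≤ M)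
    (a b : ℝ) : IntervalIntegrable f volume a b :=
  (intervalIntegrable_const (c := M)).mono_fun' hf.aestronglyMeasurable (ae_of_all _ hM)

lemma abs_integral_sign_sin_le {N : ℝ} (hN : 0 < N) (θ a b : ℝ) :
    |∫ t in a..b, Real.sign (sin (N * t - θ))| ≤ 2 * π / N := by
  have hi : ∀ a b, IntervalIntegrable (fun t ↦ Real.sign (sin t)) volume a b :=
    intervalIntegrable_of_abs_le (measurable_real_sign.comp measurable_sin)
      fun t ↦ abs_sign_le_one (sin t)
  have hmean : ∫ t in 0..2 * π, Real.sign (sin t) = 0 := by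
    have hshift : ∫ t in π..2 * π, Real.sign (sin t) = ∫ t in 0..π, Real.sign (sin (t + π)) := by
      rw [intervalIntegral.integral_comp_add_right fun t ↦ Real.sign (sin t), zero_add, two_mul]
    rw [← intervalIntegral.integral_add_adjacent_intervals (hi 0 π) (hi π (2 * π)), hshift]
    simp only [sin_add_pi, sign_neg, intervalIntegral.integral_neg, add_neg_cancel]
  simpa only [one_mul] using abs_integral_comp_mul_sub_le_of_periodic
    (g := fun t ↦ Real.sign (sin t)) two_pi_pos (fun t ↦ by simp only [sin_add_two_pi]) hi
    (fun t ↦ abs_sign_le_one _) hmean hN θ a b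

/-! ### The `L¹` norm of the remainder kernel -/

lemma integral_neg_eq_add_add {g : ℝ → ℝ} {a b : ℝ} (ha : 0 ≤ a) (hab : a ≤ b)
    (hg : IntervalIntegrable g volume (-b) b) :
    ∫ t in -b..b, g t = (∫ t in a..b, g (-t)) + (∫ t in -a..a, g t) + ∫ t in a..b, g t := by
  have hsub {u v : ℝ} (hu : -b ≤ u) (huv : u ≤ v) (hv : v ≤ b) : IntervalIntegrable g volume u v :=
    hg.mono_set (by
      rw [Set.uIcc_of_le huv, Set.uIcc_of_le (by linarith)]
      exact Set.Icc_subset_Icc hu hv)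
  rw [intervalIntegral.integral_comp_neg fun t ↦ g t,
    intervalIntegral.integral_add_adjacent_intervals
      (hsub le_rfl (by linarith) (by linarith)) (hsub (by linarith) (by linarith) hab),
    intervalIntegral.integral_add_adjacent_intervals
      (hsub le_rfl (by linarith) hab) (hsub (by linarith) hab le_rfl)]

lemma integral_congr_Ioc {f g : ℝ → ℝ} {a b : ℝ} (hab : a ≤ b)
    (h : ∀ t ∈ Set.Ioc a b, f t = g t) : ∫ t in a..b, f t = ∫ t in a..b, g t :=
  intervalIntegral.integral_congr_ae (ae_of_all _ (by rwa [Set.uIoc_of_le hab]))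

section LogAsymptotics

variable {A y N : ℝ}

lemma abs_integral_tail_sub_log_le (hA : 0 ≤ A) (hy : 0 < y) (hyπ : y ≤ π) (hN : π ≤ N * y) (θ : ℝ)
    {h : ℝ → ℝ} (hi : IntervalIntegrable h volume y π)
    (hbound : ∀ t ∈ Set.Ioc y π, |h t - A * (|sin (N * t - θ)| / t)| ≤
      A * (π ^ 2 * y / 2 * (1 / t ^ 2) + 1)) :
    |(∫ t in y..π, h t) - A * (2 / π * log (π / y))| ≤ A * (π ^ 2 / 2 + π + 1) := by
  have hN0 : 0 < N := pos_of_mul_pos_left (pi_pos.trans_le hN) hy.le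
  have hsq := intervalIntegrable_one_div_sq hy hyπ
  have hsin := intervalIntegrable_abs_sin_div hy hyπ N θ
  have hreplace : |(∫ t in y..π, h t) - A * ∫ t in y..π, |sin (N * t - θ)| / t| ≤
      A * (π ^ 2 / 2 + π) := by
    rw [← intervalIntegral.integral_const_mul,
      ← intervalIntegral.integral_sub hi (hsin.const_mul A), ← norm_eq_abs]
    refine (intervalIntegral.norm_integral_le_of_norm_le hyπ (ae_of_all _ hbound)
      (((hsq.const_mul _).add intervalIntegrable_const).const_mul A)).trans ?_
    rw [intervalIntegral.integral_const_mul,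
      intervalIntegral.integral_add (hsq.const_mul _) intervalIntegrable_const,
      intervalIntegral.integral_const_mul, integral_one_div_sq hy hyπ,
      intervalIntegral.integral_const, smul_eq_mul, mul_one]
    refine mul_le_mul_of_nonneg_left ?_ hA
    have hfactor : π ^ 2 * y / 2 * (1 / y - 1 / π) = π ^ 2 / 2 - π * y / 2 := by field_simp
    nlinarith [pi_pos]
  have hlog : |A * (∫ t in y..π, |sin (N * t - θ)| / t) - A * (2 / π * log (π / y))| ≤ A * 1 := by
    rw [← mul_sub, abs_mul, abs_of_nonneg hA]
    refine mul_le_mul_of_nonneg_left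
      ((abs_integral_abs_sin_div_sub_log_le hN0 θ hy hyπ).trans ?_) hA
    rwa [div_mul_div_comm, mul_one, div_le_one (by positivity)]
  linarith [abs_sub_le (∫ t in y..π, h t) (A * ∫ t in y..π, |sin (N * t - θ)| / t)
    (A * (2 / π * log (π / y)))]

lemma abs_integral_sub_log_le (hA : 0 ≤ A) (hy : 0 < y) (hyπ : y ≤ π) (hN : π ≤ N * y) (θ : ℝ)
    {h : ℝ → ℝ} (hi : IntervalIntegrable h volume (-π) π)
    (hcore : ∀ t, |t| ≤ y → |h t| ≤ A * (3 / y))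
    (htail : ∀ t, y < |t| → |t| ≤ π → |h t - A * (|sin (N * t - θ) / t|)| ≤
      A * (π ^ 2 * y / 2 * (1 / t ^ 2) + 1)) :
    |(∫ t in -π..π, h t) - A * (4 / π * log (π / y))| ≤ A * (π ^ 2 + 2 * π + 8) := by
  have htailInt {g : ℝ → ℝ} (hg : IntervalIntegrable g volume (-π) π) :
      IntervalIntegrable g volume y π := by
    refine hg.mono_set ?_
    rw [Set.uIcc_of_le hyπ, Set.uIcc_of_le (by linarith)]
    exact Set.Icc_subset_Icc_left (by linarith)
  have hineg : IntervalIntegrable (fun t ↦ h (-t)) volume (-π) π := by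
    simpa only [neg_neg] using ((IntervalIntegrable.iff_comp_neg (by simp)).1 hi).symm
  have hright := abs_integral_tail_sub_log_le hA hy hyπ hN θ (htailInt hi) fun t ht ↦ by
    have ht0 := hy.trans ht.1
    have h := htail t (by rw [abs_of_pos ht0]; exact ht.1) (by rw [abs_of_pos ht0]; exact ht.2)
    rwa [abs_div, abs_of_pos ht0] at h
  have hleft := abs_integral_tail_sub_log_le hA hy hyπ hN (-θ) (htailInt hineg) fun t ht ↦ by
    have ht0 := hy.trans ht.1
    have h := htail (-t) (by rw [abs_neg, abs_of_pos ht0]; exact ht.1)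
      (by rw [abs_neg, abs_of_pos ht0]; exact ht.2)
    rwa [abs_div, abs_neg, abs_of_pos ht0, neg_sq, mul_neg, ← neg_add', sin_neg, abs_neg,
      ← sub_neg_eq_add] at h
  have hmid : |∫ t in -y..y, h t| ≤ 6 * A := by
    refine (intervalIntegral.norm_integral_le_of_norm_le_const (f := h) (C := A * (3 / y))
      fun t ht ↦ ?_).trans_eq ?_
    · rw [Set.uIoc_of_le (by linarith)] at ht
      exact hcore t (abs_le.2 ⟨ht.1.le, ht.2⟩)
    · rw [abs_of_pos (by linarith)]
      field_simp
      ring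
  rw [abs_le] at hleft hright hmid ⊢
  rw [integral_neg_eq_add_add hy.le hyπ hi]
  have hdouble : A * (4 / π * log (π / y)) = 2 * (A * (2 / π * log (π / y))) := by ring
  constructor <;> linarith

end LogAsymptotics

lemma exists_integral_eq_zero_eqOn_of_abs_integral_le {u : ℝ → ℝ} (hu : Measurable u)
    (hu1 : ∀ t, |u t| ≤ 1) {a b : ℝ} (ha : 0 < a) (hab : a ≤ b)
    (hint : |(∫ t in a..b, u (-t)) + ∫ t in a..b, u t| ≤ 2 * a) :
    ∃ s : ℝ → ℝ, Measurable s ∧ (∀ t, |s t| ≤ 1) ∧ (∫ t in -b..b, s t) = 0 ∧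
      ∀ t, a < |t| → s t = u t := by
  set κ : ℝ := -((∫ t in a..b, u (-t)) + ∫ t in a..b, u t) / (2 * a) with hκ
  have hκ1 : |κ| ≤ 1 := by
    rwa [hκ, abs_div, abs_neg, abs_of_pos (by positivity : 0 < 2 * a), div_le_one (by positivity)]
  set s : ℝ → ℝ := fun t ↦ if |t| ≤ a then κ else u t with hs
  have hsm : Measurable s :=
    Measurable.ite (measurableSet_le continuous_abs.measurable measurable_const) measurable_const hu
  have hs1 (t : ℝ) : |s t| ≤ 1 := by
    simp only [hs]
    split_ifs
    exacts [hκ1, hu1 t]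
  have hsu (t : ℝ) (ht : a < |t|) : s t = u t := if_neg ht.not_ge
  refine ⟨s, hsm, hs1, ?_, hsu⟩
  have hpos {t : ℝ} (ht : t ∈ Set.Ioc a b) : a < |t| := ht.1.trans_le (le_abs_self t)
  have hmid : ∫ t in -a..a, s t = 2 * a * κ := by
    rw [integral_congr_Ioc (by linarith) fun t ht ↦ if_pos (abs_le.2 ⟨ht.1.le, ht.2⟩),
      intervalIntegral.integral_const, smul_eq_mul]
    ring
  rw [integral_neg_eq_add_add ha.le hab (intervalIntegrable_of_abs_le hsm hs1 _ _), hmid,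
    integral_congr_Ioc hab fun t ht ↦ hsu t (hpos ht),
    integral_congr_Ioc hab fun t ht ↦ hsu (-t) ((abs_neg t).symm ▸ hpos ht), hκ]
  field_simp
  ring

lemma sign_mul_self_eq_abs (x : ℝ) : Real.sign x * x = |x| := by
  rcases lt_trichotomy x 0 with hx | rfl | hx
  · rw [sign_of_neg hx, abs_of_neg hx, neg_one_mul]
  · simp
  · rw [sign_of_pos hx, abs_of_pos hx, one_mul]

lemma sign_div_of_pos (x : ℝ) {t : ℝ} (ht : 0 < t) : Real.sign (x / t) = Real.sign x := by
  simp only [Real.sign, div_pos_iff_of_pos_right ht, div_lt_iff₀ ht, zero_mul]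

lemma abs_integral_sign_sin_div_le {N : ℝ} (hN : 0 < N) (θ : ℝ) {a b : ℝ} (ha : 0 < a)
    (hab : a ≤ b) :
    |(∫ t in a..b, Real.sign (sin (N * -t - θ) / -t)) +
      ∫ t in a..b, Real.sign (sin (N * t - θ) / t)| ≤ 4 * π / N := by
  have hright : ∫ t in a..b, Real.sign (sin (N * t - θ) / t) =
      ∫ t in a..b, Real.sign (sin (N * t - θ)) :=
    integral_congr_Ioc hab fun t ht ↦ sign_div_of_pos _ (ha.trans ht.1)
  have hleft : ∫ t in a..b, Real.sign (sin (N * -t - θ) / -t) =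
      ∫ t in a..b, Real.sign (sin (N * t - -θ)) :=
    integral_congr_Ioc hab fun t ht ↦ by
      rw [mul_neg, ← neg_add', sin_neg, neg_div_neg_eq, sign_div_of_pos _ (ha.trans ht.1),
        sub_neg_eq_add]
  rw [hleft, hright]
  refine (abs_add_le _ _).trans ((add_le_add (abs_integral_sign_sin_le hN (-θ) a b)
    (abs_integral_sign_sin_le hN θ a b)).trans_eq ?_)
  ring

/-- Summable convex weights that decay slowly, on the scale `1 / y`: their first step and their sum
are comparable with those of the geometric sequence `c 0 * (1 - y) ^ j`. -/
structure HasDecayScale (c : ℕ → ℝ) (y : ℝ) : Prop where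
  summable : Summable c
  convex : Antitone (negDiff c)
  pos : 0 < y
  le_one : y ≤ 1
  negDiff_zero_le : negDiff c 0 ≤ c 0 * y
  tsum_le : ∑' j, c j ≤ c 0 * (3 / y)

namespace HasDecayScale

variable {c : ℕ → ℝ} {y : ℝ}

lemma nonneg (h : HasDecayScale c y) (j : ℕ) : 0 ≤ c j := by
  have hdiff := nonneg_of_antitone_of_summable h.convex (hasSum_negDiff h.summable).summable
  exact nonneg_of_antitone_of_summable
    (antitone_nat_of_succ_le fun k ↦ sub_nonneg.1 (hdiff k)) h.summable j

lemma le_pi (h : HasDecayScale c y) : y ≤ π :=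
  h.le_one.trans (one_le_two.trans two_le_pi)

lemma abs_cosKernel_add_sin_div_le (h : HasDecayScale c y) (n : ℕ) (θ : ℝ) {t : ℝ} (ht0 : t ≠ 0)
    (ht : |t| ≤ π) :
    |cosKernel c n θ t + c 0 * (sin ((n - 1 / 2) * t - θ) / t)| ≤
      c 0 * (π ^ 2 * y / 2 * (1 / t ^ 2) + 1) := by
  have hscale (t : ℝ) : π ^ 2 * negDiff c 0 / 2 * (1 / t ^ 2) + c 0 ≤
      c 0 * (π ^ 2 * y / 2 * (1 / t ^ 2) + 1) :=
    calc π ^ 2 * negDiff c 0 / 2 * (1 / t ^ 2) + c 0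
        ≤ π ^ 2 * (c 0 * y) / 2 * (1 / t ^ 2) + c 0 := by
          gcongr
          exact h.negDiff_zero_le
      _ = c 0 * (π ^ 2 * y / 2 * (1 / t ^ 2) + 1) := by ring
  rcases ht0.lt_or_gt with hneg | hpos
  · have hest := cosKernel.abs_add_sin_div_le h.summable h.convex n (-θ) (neg_pos.2 hneg)
      (abs_of_neg hneg ▸ ht)
    rw [← cosKernel.neg_eq, neg_neg, mul_neg, ← neg_add', ← sub_eq_add_neg, sin_neg, neg_div_neg_eq,
      neg_sq] at hest
    exact hest.trans (hscale t)
  · exact (cosKernel.abs_add_sin_div_le h.summable h.convex n θ hpos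
      (abs_of_pos hpos ▸ ht)).trans (hscale t)

lemma abs_cosKernel_le (h : HasDecayScale c y) (n : ℕ) (θ t : ℝ) :
    |cosKernel c n θ t| ≤ c 0 * (3 / y) :=
  (cosKernel.abs_le_tsum h.summable h.nonneg n θ t).trans h.tsum_le

theorem abs_integral_abs_cosKernel_sub_log_le (h : HasDecayScale c y) {n : ℕ}
    (hn : π ≤ (n - 1 / 2) * y) (θ : ℝ) :
    |(∫ t in -π..π, |cosKernel c n θ t|) - c 0 * (4 / π * log (π / y))| ≤
      c 0 * (π ^ 2 + 2 * π + 8) := by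
  refine abs_integral_sub_log_le (h.nonneg 0) h.pos h.le_pi hn θ
    ((cosKernel.continuous h.summable n θ).abs.intervalIntegrable _ _)
    (fun t _ ↦ (abs_abs _).trans_le (h.abs_cosKernel_le n θ t)) fun t hyt ht ↦ ?_
  have ht0 : t ≠ 0 := abs_pos.1 (h.pos.trans hyt)
  refine le_trans ?_ (h.abs_cosKernel_add_sin_div_le n θ ht0 ht)
  have habs := abs_abs_sub_abs_le_abs_sub (cosKernel c n θ t)
    (-(c 0 * (sin ((n - 1 / 2) * t - θ) / t)))
  rwa [abs_neg, abs_mul, abs_of_nonneg (h.nonneg 0), sub_neg_eq_add] at habs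

/- The sign pattern of the leading term `-sin ((n - 1/2) t - θ) / t` has almost zero mean off
`[-y, y]`; a constant on `[-y, y]` corrects it at no cost to the logarithm. -/
theorem exists_log_le_integral_cosKernel_mul (h : HasDecayScale c y) {n : ℕ}
    (hn : 2 * π ≤ (n - 1 / 2) * y) (θ : ℝ) :
    ∃ s : ℝ → ℝ, Measurable s ∧ (∀ t, |s t| ≤ 1) ∧ (∫ t in -π..π, s t) = 0 ∧
      c 0 * (4 / π * log (π / y) - (π ^ 2 + 2 * π + 8)) ≤
        ∫ t in -π..π, cosKernel c n θ t * s t := by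
  have hN : 0 < (n - 1 / 2 : ℝ) := pos_of_mul_pos_left (two_pi_pos.trans_le hn) h.pos.le
  set u : ℝ → ℝ := fun t ↦ -Real.sign (sin ((n - 1 / 2) * t - θ) / t) with hu
  have hum : Measurable u := (measurable_real_sign.comp (by fun_prop)).neg
  have hu1 (t : ℝ) : |u t| ≤ 1 := (abs_neg _).trans_le (abs_sign_le_one _)
  have hint : |(∫ t in y..π, u (-t)) + ∫ t in y..π, u t| ≤ 2 * y := by
    simp only [hu, intervalIntegral.integral_neg, ← neg_add, abs_neg]
    refine (abs_integral_sign_sin_div_le hN θ h.pos h.le_pi).trans ?_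
    rw [div_le_iff₀ hN]
    linarith
  obtain ⟨s, hsm, hs1, hs0, hsu⟩ :=
    exists_integral_eq_zero_eqOn_of_abs_integral_le hum hu1 h.pos h.le_pi hint
  refine ⟨s, hsm, hs1, hs0, ?_⟩
  have hlog := abs_integral_sub_log_le (h.nonneg 0) h.pos h.le_pi
    (by linarith [pi_pos] : π ≤ (n - 1 / 2) * y) θ (h := fun t ↦ cosKernel c n θ t * s t)
    (intervalIntegrable_continuous_mul (intervalIntegrable_of_abs_le hsm hs1 _ _)
      (cosKernel.continuous h.summable n θ)) (fun t _ ↦ ?_) fun t hyt ht ↦ ?_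
  · linarith [(abs_le.1 hlog).1]
  · rw [abs_mul]
    exact (mul_le_of_le_one_right (abs_nonneg _) (hs1 t)).trans (h.abs_cosKernel_le n θ t)
  · have ht0 : t ≠ 0 := abs_pos.1 (h.pos.trans hyt)
    refine le_trans ?_ (h.abs_cosKernel_add_sin_div_le n θ ht0 ht)
    have hfactor : cosKernel c n θ t * s t - c 0 * |sin ((n - 1 / 2) * t - θ) / t| =
        u t * (cosKernel c n θ t + c 0 * (sin ((n - 1 / 2) * t - θ) / t)) := by
      rw [hsu t hyt, ← sign_mul_self_eq_abs]
      ring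
    rw [hfactor, abs_mul]
    exact mul_le_of_le_one_left (abs_nonneg _) (hu1 t)

end HasDecayScale

/-! ### Fourier sums on the class -/

lemma integral_mul_eq_zero_of_not_aestronglyMeasurable {K φ : ℝ → ℝ} {a b : ℝ} (hK : Measurable K)
    (hK0 : ∀ᵐ t, K t ≠ 0) (hφ : ¬ AEStronglyMeasurable φ (volume.restrict (Set.uIoc a b))) :
    ∫ t in a..b, K t * φ t = 0 := by
  refine intervalIntegral.integral_undef fun hi ↦ hφ ?_
  refine (hK.inv.aestronglyMeasurable.mul
    (intervalIntegrable_iff.1 hi).aestronglyMeasurable).congr ?_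
  filter_upwards [ae_restrict_of_ae hK0] with t ht
  exact inv_mul_cancel_left₀ ht (φ t)

lemma ae_abs_le_one_of_eLpNorm_top_le_one {φ : ℝ → ℝ} {T : ℝ} (hT : 0 < T)
    (hφ : Function.Periodic φ T) (h : eLpNorm φ ∞ (volume.restrict (Set.Ioc 0 T)) ≤ 1) :
    ∀ᵐ t, |φ t| ≤ 1 := by
  refine ae_of_periodic_of_ae_restrict_Ioc hT (a := 0) (fun t ↦ by rw [hφ t]) ?_
  rw [zero_add]
  filter_upwards [ae_le_eLpNormEssSup (f := φ) (μ := volume.restrict (Set.Ioc 0 T))] with t ht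
  rw [← ENNReal.ofReal_le_one, ← Real.enorm_eq_ofReal_abs]
  exact ht.trans (eLpNorm_exponent_top.symm.trans_le h)

lemma integral_comp_sub_left_of_periodic {g : ℝ → ℝ} (hg : Function.Periodic g (2 * π)) (x : ℝ) :
    ∫ t in -π..π, g (x - t) = ∫ t in -π..π, g t := by
  have hshift := hg.intervalIntegral_add_eq (x - π) (-π)
  rw [show x - π + 2 * π = x - -π by ring, show -π + 2 * π = π by ring] at hshift
  rw [intervalIntegral.integral_comp_sub_left, hshift]

lemma abs_integral_comp_sub_mul_le {K φ : ℝ → ℝ} (hK : Continuous K)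
    (hKp : Function.Periodic K (2 * π)) (hφ : ∀ᵐ t, |φ t| ≤ 1) (x : ℝ) :
    |∫ t in -π..π, K (x - t) * φ t| ≤ ∫ t in -π..π, |K t| := by
  have habs : IntervalIntegrable (fun t ↦ |K (x - t)|) volume (-π) π :=
    Continuous.intervalIntegrable (by fun_prop) _ _
  calc |∫ t in -π..π, K (x - t) * φ t|
      ≤ ∫ t in -π..π, |K (x - t)| := by
        rw [← norm_eq_abs]
        refine intervalIntegral.norm_integral_le_of_norm_le (by linarith [pi_pos]) ?_ habs
        filter_upwards [hφ] with t ht _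
        rw [norm_mul]
        exact mul_le_of_le_one_right (abs_nonneg _) ht
    _ = ∫ t in -π..π, |K t| := integral_comp_sub_left_of_periodic (hKp.comp abs) x

lemma genPoissonKernel_eq_cosKernel (α r β : ℝ) :
    genPoissonKernel α r β = cosKernel (expWeight α r 1) 1 (β * π / 2) := by
  funext t
  refine tsum_congr fun k ↦ ?_
  rw [expWeight, add_comm (1 : ℝ), Nat.cast_add, Nat.cast_one, add_comm (1 : ℝ)]

section PoissonClass

variable {α r β : ℝ} {f φ : ℝ → ℝ}

/- The class does not ask `φ` to be measurable. As the kernel vanishes only on a null set, the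
integrals against a non-measurable `φ` all have the junk value `0`, and `φ` may be replaced by
`0`. -/
lemma exists_intervalIntegrable_density (hα : 0 < α) (hr0 : 0 < r) (hr1 : r ≤ 1)
    (hf : f ∈ poissonClass α r β ∞) :
    ∃ (a : ℝ) (φ : ℝ → ℝ), IntervalIntegrable φ volume (-π) π ∧ (∀ᵐ t, |φ t| ≤ 1) ∧
      ∀ x, f x = a + 1 / π * ∫ t in -π..π, genPoissonKernel α r β (x - t) * φ t := by
  obtain ⟨-, a₀, φ, hφp, hφ1, -, hfφ⟩ := hf
  have hφae := ae_abs_le_one_of_eLpNorm_top_le_one two_pi_pos hφp hφ1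
  by_cases hφm : AEStronglyMeasurable φ (volume.restrict (Set.uIoc (-π) π))
  · refine ⟨a₀ / 2, φ, ?_, hφae, hfφ⟩
    exact (intervalIntegrable_const (c := (1 : ℝ))).mono_fun hφm
      (ae_restrict_of_ae (hφae.mono fun t ht ↦ ht.trans_eq norm_one.symm))
  · refine ⟨a₀ / 2, 0, intervalIntegrable_const, ae_of_all _ fun t ↦ by simp, fun x ↦ ?_⟩
    have hsum := summable_expWeight hα hr0 1
    have hne := cosKernel.ae_ne_zero (completelyMonotone_expWeight hα.le hr0.le hr1 one_pos) hsum
      (exp_ne_zero _) one_ne_zero (β * π / 2)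
    rw [← genPoissonKernel_eq_cosKernel] at hne
    have hcont : Continuous (genPoissonKernel α r β) :=
      genPoissonKernel_eq_cosKernel α r β ▸ cosKernel.continuous hsum 1 _
    have hzero := integral_mul_eq_zero_of_not_aestronglyMeasurable
      (K := fun t ↦ genPoissonKernel α r β (x - t)) (by fun_prop)
      ((Measure.measurePreserving_sub_left volume x).quasiMeasurePreserving.ae hne) hφm
    rw [hfφ x, hzero]
    simp

variable {n : ℕ}

lemma sub_fourierSum_eq_integral_expWeight {a : ℝ} (hα : 0 < α) (hr : 0 < r) (hn : n ≠ 0)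
    (hφ : IntervalIntegrable φ volume (-π) π)
    (hf : ∀ x, f x = a + 1 / π * ∫ t in -π..π, genPoissonKernel α r β (x - t) * φ t) (x : ℝ) :
    f x - fourierSum (n - 1) f x =
      1 / π * ∫ t in -π..π, cosKernel (expWeight α r n) n (β * π / 2) (x - t) * φ t := by
  obtain ⟨m, rfl⟩ := Nat.exists_eq_succ_of_ne_zero hn
  have hweight : (fun j ↦ expWeight α r 1 (m + j)) = expWeight α r (m.succ : ℕ) := by
    funext j
    simp only [expWeight]
    push_cast
    ring_nf
  rw [genPoissonKernel_eq_cosKernel] at hf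
  rw [← hweight, Nat.succ_sub_one]
  exact sub_fourierSum_eq_integral_cosKernel hφ (summable_expWeight hα hr 1) hf m x

lemma abs_sub_fourierSum_le_of_mem_poissonClass (hα : 0 < α) (hr0 : 0 < r) (hr1 : r ≤ 1)
    (hn : n ≠ 0) (hf : f ∈ poissonClass α r β ∞) (x : ℝ) :
    |f x - fourierSum (n - 1) f x| ≤
      1 / π * ∫ t in -π..π, |cosKernel (expWeight α r n) n (β * π / 2) t| := by
  obtain ⟨a, φ, hφi, hφ1, hfφ⟩ := exists_intervalIntegrable_density hα hr0 hr1 hf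
  rw [sub_fourierSum_eq_integral_expWeight hα hr0 hn hφi hfφ, abs_mul,
    abs_of_pos (one_div_pos.2 pi_pos)]
  gcongr
  exact abs_integral_comp_sub_mul_le (cosKernel.continuous (summable_expWeight hα hr0 n) n _)
    (cosKernel.periodic _ _ _) hφ1 x

lemma exists_periodic_eqOn_Ioc (s : ℝ → ℝ) : ∃ φ : ℝ → ℝ, Function.Periodic φ (2 * π) ∧
    Set.EqOn φ s (Set.Ioc (-π) π) ∧ Set.range φ ⊆ Set.range s := by
  refine ⟨fun t ↦ s (toIocMod two_pi_pos (-π) t), fun t ↦ by simp only [toIocMod_add_right],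
    fun t ht ↦ ?_, Set.range_comp_subset_range _ s⟩
  dsimp only
  rw [(toIocMod_eq_self two_pi_pos).2]
  rwa [show -π + 2 * π = π by ring]

lemma mem_poissonClass_top_of_abs_le_one (hφp : Function.Periodic φ (2 * π))
    (hφ1 : ∀ t, |φ t| ≤ 1) (hφ0 : ∫ t in -π..π, φ t = 0) :
    (fun x ↦ 1 / π * ∫ t in -π..π, genPoissonKernel α r β (x - t) * φ t) ∈
      poissonClass α r β ∞ := by
  refine ⟨fun x ↦ ?_, 0, φ, hφp, ?_, ?_, fun x ↦ by rw [zero_div, zero_add]⟩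
  · simp only [add_sub_right_comm x, genPoissonKernel_eq_cosKernel, cosKernel.periodic _ _ _ _]
  · refine eLpNorm_exponent_top.trans_le
      (eLpNormEssSup_le_of_ae_enorm_bound (ae_of_all _ fun t ↦ ?_))
    rw [Real.enorm_eq_ofReal_abs]
    exact ENNReal.ofReal_le_one.2 (hφ1 t)
  · have hshift := hφp.intervalIntegral_add_eq 0 (-π)
    rwa [zero_add, show -π + 2 * π = π by ring, hφ0] at hshift

lemma exists_mem_poissonClass_sub_fourierSum_eq (hα : 0 < α) (hr : 0 < r) (hn : n ≠ 0)
    {s : ℝ → ℝ} (hsm : Measurable s) (hs1 : ∀ t, |s t| ≤ 1) (hs0 : ∫ t in -π..π, s t = 0) :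
    ∃ f ∈ poissonClass α r β ∞, f 0 - fourierSum (n - 1) f 0 =
      1 / π * ∫ t in -π..π, cosKernel (expWeight α r n) n (-(β * π / 2)) t * s t := by
  obtain ⟨φ, hφp, hφs, hrange⟩ := exists_periodic_eqOn_Ioc s
  have hππ : -π ≤ π := by linarith [pi_pos]
  have hφ1 (t : ℝ) : |φ t| ≤ 1 := by
    obtain ⟨u, hu⟩ := hrange ⟨t, rfl⟩
    exact hu ▸ hs1 u
  have hφi : IntervalIntegrable φ volume (-π) π :=
    (intervalIntegrable_of_abs_le hsm hs1 (-π) π).congr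
      (by rw [Set.uIoc_of_le hππ]; exact hφs.symm)
  refine ⟨_, mem_poissonClass_top_of_abs_le_one hφp hφ1
    ((integral_congr_Ioc hππ hφs).trans hs0), ?_⟩
  rw [sub_fourierSum_eq_integral_expWeight (a := 0) hα hr hn hφi fun x ↦ (zero_add _).symm]
  congr 1
  refine integral_congr_Ioc hππ fun t ht ↦ ?_
  rw [zero_sub, cosKernel.neg_eq, hφs ht]

end PoissonClass

section Deviation

variable {α r β : ℝ} {p : ℝ≥0∞} {n : ℕ} {U : ℝ}

lemma EnC_le (hU : 0 ≤ U)
    (h : ∀ f ∈ poissonClass α r β p, ∀ x, |f x - fourierSum (n - 1) f x| ≤ U) :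
    EnC α r β p n ≤ U :=
  Real.iSup_le (fun f ↦ Real.iSup_le (fun hf ↦ Real.iSup_le (h f hf) hU) hU) hU

lemma abs_sub_fourierSum_le_EnC
    (h : ∀ f ∈ poissonClass α r β p, ∀ x, |f x - fourierSum (n - 1) f x| ≤ U)
    {f : ℝ → ℝ} (hf : f ∈ poissonClass α r β p) (x : ℝ) :
    |f x - fourierSum (n - 1) f x| ≤ EnC α r β p n := by
  have hU : 0 ≤ U := (abs_nonneg _).trans (h f hf x)
  have houter : BddAbove (Set.range fun g ↦ ⨆ _ : g ∈ poissonClass α r β p, ⨆ x : ℝ,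
      |g x - fourierSum (n - 1) g x|) :=
    ⟨U, Set.forall_mem_range.2 fun g ↦
      Real.iSup_le (fun hg ↦ Real.iSup_le (h g hg) hU) hU⟩
  have hinner := le_ciSup (f := fun x ↦ |f x - fourierSum (n - 1) f x|)
    ⟨U, Set.forall_mem_range.2 (h f hf)⟩ x
  refine hinner.trans ((le_ciSup houter f).trans' ?_)
  rw [ciSup_pos hf]

lemma hasDecayScale_expWeight {n : ℝ} (hα : 0 < α) (hr0 : 0 < r) (hr1 : r ≤ 1) (hn : 0 < n)
    (hlarge : 2 ≤ α * r * n ^ r) (hsmall : α * r * n ^ (r - 1) ≤ 1) :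
    HasDecayScale (expWeight α r n) (α * r * n ^ (r - 1)) where
  summable := summable_expWeight hα hr0 n
  convex := (completelyMonotone_expWeight hα.le hr0.le hr1 hn).negDiff.antitone
  pos := by positivity
  le_one := hsmall
  negDiff_zero_le := negDiff_expWeight_zero_le hα.le hr0.le hr1 hn
  tsum_le := tsum_expWeight_le hα hr0 hn hlarge hsmall

lemma abs_EnC_sub_log_le (hα : 0 < α) (hr0 : 0 < r) (hr1 : r ≤ 1) (hn : n ≠ 0) {y : ℝ}
    (hdecay : HasDecayScale (expWeight α r n) y) (hny : 2 * π ≤ (n - 1 / 2) * y) :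
    |EnC α r β ∞ n - 1 / π * (expWeight α r n 0 * (4 / π * log (π / y)))| ≤
      1 / π * (expWeight α r n 0 * (π ^ 2 + 2 * π + 8)) := by
  have hπ := one_div_pos.2 pi_pos
  have hupper (f) (hf : f ∈ poissonClass α r β ∞) (x : ℝ) :=
    abs_sub_fourierSum_le_of_mem_poissonClass hα hr0 hr1 hn hf x
  have hL1 := hdecay.abs_integral_abs_cosKernel_sub_log_le (n := n) (by linarith [pi_pos])
    (β * π / 2)
  obtain ⟨s, hsm, hs1, hs0, hlog⟩ :=
    hdecay.exists_log_le_integral_cosKernel_mul hny (-(β * π / 2))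
  obtain ⟨f, hf, hdev⟩ :=
    exists_mem_poissonClass_sub_fourierSum_eq (β := β) hα hr0 hn hsm hs1 hs0
  have hle : EnC α r β ∞ n ≤ _ := EnC_le ((abs_nonneg _).trans (hupper f hf 0)) hupper
  have hge := (le_abs_self _).trans (abs_sub_fourierSum_le_EnC hupper hf 0)
  rw [hdev] at hge
  rw [abs_le]
  constructor
  · linarith [mul_le_mul_of_nonneg_left hlog hπ.le]
  · linarith [mul_le_mul_of_nonneg_left (abs_le.1 hL1).2 hπ.le]

end Deviation

/-! ### The threshold `n₁` -/

lemma le_and_one_le_mul_of_one_add_log_le {c x y ε : ℝ} (hc : 1 ≤ c) (hy : 0 < y) (hyx : y ≤ x)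
    (hε : ε ≤ 1) (h : 1 / x * (1 + log (c / y)) + y ≤ ε) : y ≤ ε ∧ 1 ≤ ε * x := by
  have hx : 0 < x := hy.trans_le hyx
  have hc0 : 0 < c := one_pos.trans_le hc
  have hlog : 1 - y / c ≤ log (c / y) := by
    simpa only [inv_div] using one_sub_inv_le_log_of_pos (div_pos hc0 hy)
  have hy2 : y ≤ 2 * c := by
    have hratio : y / x * (1 / c) ≤ 1 * 1 :=
      mul_le_mul ((div_le_one hx).2 hyx) ((div_le_one hc0).2 hc) (by positivity) zero_le_one
    have hterm : -(y / x * (1 / c)) ≤ 1 / x * (1 + log (c / y)) := by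
      rw [show -(y / x * (1 / c)) = 1 / x * -(y / c) by ring]
      gcongr
      linarith
    linarith
  have hyε : y ≤ ε := by
    have hratio : y / c ≤ 2 := (div_le_iff₀ hc0).2 hy2
    have hterm : 0 ≤ 1 / x * (1 + log (c / y)) := mul_nonneg (by positivity) (by linarith)
    linarith
  have hlog0 : 0 ≤ log (c / y) := log_nonneg ((one_le_div hy).2 (by linarith))
  have hle : 1 / x * 1 ≤ 1 / x * (1 + log (c / y)) := by
    gcongr
    linarith
  exact ⟨hyε, (div_le_iff₀ hx).1 (by linarith)⟩

/-- The left-hand side of the inequality that defines `n₁`, at a real argument. -/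
noncomputable def thresholdFun (α r x : ℝ) : ℝ :=
  1 / (α * r) * x ^ (-r) * (1 + log (π * x ^ (1 - r) / (α * r))) + α * r * x ^ (-(1 - r))

section Threshold

variable {α r : ℝ}

lemma tendsto_thresholdFun (hr0 : 0 < r) (hr1 : r < 1) (hα : 0 < α) :
    Tendsto (thresholdFun α r) atTop (nhds 0) := by
  have hlim : Tendsto (fun x : ℝ ↦ 1 / (α * r) * x ^ (-r) * (1 + log (π / (α * r))) +
      1 / (α * r) * (1 - r) * (log x / x ^ r) + α * r * x ^ (-(1 - r))) atTop
      (nhds (1 / (α * r) * 0 * (1 + log (π / (α * r))) + 1 / (α * r) * (1 - r) * 0 + α * r * 0)) :=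
    ((((tendsto_rpow_neg_atTop hr0).const_mul _).mul_const _).add
      ((isLittleO_log_rpow_atTop hr0).tendsto_div_nhds_zero.const_mul _)).add
      ((tendsto_rpow_neg_atTop (sub_pos.2 hr1)).const_mul _)
  simp only [mul_zero, zero_mul, add_zero] at hlim
  refine hlim.congr' ?_
  filter_upwards [eventually_gt_atTop 0] with x hx
  rw [thresholdFun, mul_div_right_comm, log_mul (by positivity) (by positivity), log_rpow hx,
    rpow_neg hx.le r]
  ring

lemma n₁_pos_and_thresholdFun_n₁_le (hr0 : 0 < r) (hr1 : r < 1) (hα : 0 < α) :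
    0 < n₁ α r ∧ thresholdFun α r (n₁ α r) ≤ 1 / (3 * π) ^ 3 := by
  have hsmall := ((tendsto_thresholdFun hr0 hr1 hα).comp
    tendsto_natCast_atTop_atTop).eventually_le_const (u := 1 / (3 * π) ^ 3) (by positivity)
  obtain ⟨n, hn, hn0⟩ := (hsmall.and (eventually_gt_atTop 0)).exists
  have hne : {k : ℕ | 0 < k ∧ thresholdFun α r k ≤ 1 / (3 * π) ^ 3}.Nonempty := ⟨n, hn0, hn⟩
  exact Nat.sInf_mem hne

lemma large_and_small_of_n₁_le (hr0 : 0 < r) (hr1 : r < 1) (hα : 0 < α) {n : ℕ}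
    (hn : n₁ α r ≤ n) : 7 ≤ α * r * (n : ℝ) ^ r ∧ α * r * (n : ℝ) ^ (r - 1) ≤ 1 := by
  obtain ⟨hm0, hm⟩ := n₁_pos_and_thresholdFun_n₁_le hr0 hr1 hα
  set m := n₁ α r
  have hm0' : (0 : ℝ) < m := Nat.cast_pos.2 hm0
  have hmn : (m : ℝ) ≤ n := Nat.cast_le.2 hn
  have hε : 1 / (3 * π) ^ 3 ≤ 1 / 7 :=
    one_div_le_one_div_of_le (by norm_num) <|
      calc (7 : ℝ) ≤ (3 * 3) ^ 3 := by norm_num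
        _ ≤ (3 * π) ^ 3 := by gcongr; exact pi_gt_three.le
  have hcrit : 1 / (α * r * (m : ℝ) ^ r) * (1 + log (π / (α * r * (m : ℝ) ^ (r - 1)))) +
      α * r * (m : ℝ) ^ (r - 1) ≤ 1 / (3 * π) ^ 3 := by
    refine hm.trans_eq' ?_
    rw [thresholdFun, rpow_neg hm0'.le, ← neg_sub r 1, rpow_neg hm0'.le, neg_neg,
      one_div_mul_eq_div]
    field_simp
  obtain ⟨hsmall, hlarge⟩ := le_and_one_le_mul_of_one_add_log_le (by linarith [pi_gt_three])
    (by positivity) (by gcongr; exacts [Nat.one_le_cast.2 hm0, by linarith])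
    (hε.trans (by norm_num)) hcrit
  constructor
  · calc 7 ≤ α * r * (m : ℝ) ^ r := by
          nlinarith [show 0 < α * r * (m : ℝ) ^ r by positivity]
      _ ≤ α * r * (n : ℝ) ^ r := by gcongr
  · calc α * r * (n : ℝ) ^ (r - 1) ≤ α * r * (m : ℝ) ^ (r - 1) := by
          gcongr α * r * ?_
          exact rpow_le_rpow_of_nonpos hm0' hmn (by linarith)
      _ ≤ 1 := by linarith

end Threshold

theorem statement5_general {α r β : ℝ} {n : ℕ} (hα : 0 < α) (hr0 : 0 < r) (hr1 : r ≤ 1)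
    (hlarge : 7 ≤ α * r * (n : ℝ) ^ r) (hsmall : α * r * (n : ℝ) ^ (r - 1) ≤ 1) :
    ∃ γ : ℝ, |γ| ≤ π + 2 + 8 / π ∧
      EnC α r β ∞ n =
        4 / π ^ 2 * exp (-α * (n : ℝ) ^ r) * log (π * (n : ℝ) ^ (1 - r) / (α * r)) +
          γ * exp (-α * (n : ℝ) ^ r) := by
  have hn : n ≠ 0 := by
    rintro rfl
    norm_num [zero_rpow hr0.ne'] at hlarge
  have hn0 : (0 : ℝ) < n := by positivity
  set y := α * r * (n : ℝ) ^ (r - 1) with hy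
  have hny : 7 ≤ n * y := by
    rwa [hy, mul_left_comm, ← rpow_one_add' hn0.le (by simpa using hr0.ne'), add_sub_cancel]
  have hbound := abs_EnC_sub_log_le (β := β) hα hr0 hr1 hn
    (hasDecayScale_expWeight hα hr0 hr1 hn0 (by linarith) hsmall)
    (by linarith [pi_lt_d2])
  have harg : π * (n : ℝ) ^ (1 - r) / (α * r) = π / y := by
    rw [hy, ← neg_sub r 1, rpow_neg hn0.le]
    field_simp
  have hexp : expWeight α r n 0 = exp (-α * (n : ℝ) ^ r) := by
    rw [expWeight, Nat.cast_zero, add_zero]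
  rw [hexp, ← hy] at hbound
  rw [harg]
  set A := exp (-α * (n : ℝ) ^ r)
  have hA : 0 < A := exp_pos _
  refine ⟨(EnC α r β ∞ n - 1 / π * (A * (4 / π * log (π / y)))) / A, ?_, by field_simp; ring⟩
  rw [abs_div, abs_of_pos hA, div_le_iff₀ hA]
  refine hbound.trans_eq ?_
  field_simp

theorem statement5 (α r β : ℝ)
    (hr0 : 0 < r) (hr1 : r < 1) (hα : 0 < α) :
    ∀ n : ℕ, n₁ α r ≤ n →
      ∃ γ : ℝ, |γ| ≤ 20 * π ^ 4 ∧
        EnC α r β ∞ n =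
          4 / π ^ 2 * Real.exp (-α * (n : ℝ) ^ r) *
              Real.log (π * (n : ℝ) ^ (1 - r) / (α * r)) +
            γ * Real.exp (-α * (n : ℝ) ^ r) := by
  intro n hn
  obtain ⟨hlarge, hsmall⟩ := large_and_small_of_n₁_le hr0 hr1 hα hn
  obtain ⟨γ, hγ, hE⟩ := statement5_general hα hr0 hr1.le hlarge hsmall
  refine ⟨γ, hγ.trans ?_, hE⟩
  have hinv : 8 / π ≤ 8 := div_le_self (by norm_num) (by linarith [pi_gt_three])
  have hpow : π ≤ π ^ 4 := le_self_pow₀ (by linarith [pi_gt_three]) (by norm_num)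
  linarith [pi_gt_three]
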